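/- arXiv:1404.4786 — 2 statements merged into one kernel-verified Lean document; each statement's English description precedes it below -/
import Mathlib

section
/- For every pair of nontrivial words w₁ ∈ F_{d₁} and w₂ ∈ F_{d₂}, there exists a natural number N such that for every integer n ≥ N, every element of the real special orthogonal group SO(n) is a product g₁g₂ with g₁ ∈ w₁(SO(n)) and g₂ ∈ w₂(SO(n)); that is, SO(n) = w₁(SO(n))·w₂(SO(n)). -/
/-- The set of `w`-values in the subgroup of `G` given by the set `S`:
elements obtained by evaluating the word `w` at a `d`-tuple of elements of `S`. -/
def wordValuesIn {d : ℕ} {G : Type*} [Group G] (w : FreeGroup (Fin d)) (S : Set G) : Set G :=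
  {x | ∃ g : Fin d → G, (∀ i, g i ∈ S) ∧ FreeGroup.lift g w = x}

/-- `SO(n)`, the real special orthogonal group, as the subset of the orthogonal group
consisting of matrices of determinant 1. -/
def SO (n : ℕ) : Set (Matrix.orthogonalGroup (Fin n) ℝ) :=
  {M | (M : Matrix (Fin n) (Fin n) ℝ).det = 1}

/-!
Let `C` be the Coxeter element of `SO(n)`, `n = 2m + 1` or `n = 2m + 2`: the cyclic shift of `2m`
coordinates, extended by `-1` on the next one and by `1` on a possible last one. The shift permutes
the planes spanned by the coordinates `k` and `k + m` cyclically, up to one change of orientation,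
so for rotations of these planes the equation `⁅S, C⁆ = X` is a telescoping system for the angles,
which is solvable. As every element of `SO(n)` is conjugate to such an `X` (times a block of size at
most two), every element is conjugate to a commutator `⁅S, C⁆ = S C S⁻¹ · C⁻¹`, and it is enough to
show that `C` and `C⁻¹` are values of the two words.

The eigenvalues of the shift and of `-1` are those of `diag(z, z⁻¹)`, `z = exp(iπ / 2m)`, in the
irreducible representation `Sym^(2m)` of `SU(2)`, which is real; so `C` is the image of
`diag(z, z⁻¹)` under a homomorphism `SU(2) → SO(n)`. This element tends to `1` as `m` grows, while
the image of a nontrivial word map on `SU(2)` contains a neighbourhood of `1`: it is invariant under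
conjugation, and the trace takes an interval of values `[c, 2]` with `c < 2` on a curve in it.
-/

open Matrix
open scoped ComplexConjugate commutatorElement Finset

namespace wordValuesIn

variable {d d₁ d₂ : ℕ} {w : FreeGroup (Fin d)} {w₁ : FreeGroup (Fin d₁)} {w₂ : FreeGroup (Fin d₂)}
  {G H : Type*} [Group G] [Group H] {S : Set G} {T : Set H}

theorem map_mem {f : G →* H} (hf : Set.MapsTo f S T) {x : G} (hx : x ∈ wordValuesIn w S) :
    f x ∈ wordValuesIn w T := by
  obtain ⟨g, hg, rfl⟩ := hx
  refine ⟨f ∘ g, fun i => hf (hg i), ?_⟩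
  have hlift : FreeGroup.lift (f ∘ g) = f.comp (FreeGroup.lift g) :=
    FreeGroup.ext_hom _ _ fun i => by simp
  rw [hlift, MonoidHom.comp_apply]

theorem mem_of_isConj (hS : ∀ g, Set.MapsTo (MulAut.conj g) S S) {x y : G}
    (hx : x ∈ wordValuesIn w S) (hxy : IsConj x y) : y ∈ wordValuesIn w S := by
  obtain ⟨c, rfl⟩ := isConj_iff.mp hxy
  exact map_mem (f := (MulAut.conj c).toMonoidHom) (hS c) hx

-- A commutator `⁅s, c⁆ = (s * c * s⁻¹) * c⁻¹` is a conjugate of `c` times `c⁻¹`.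
theorem exists_mul_eq_of_isConj_commutator (hS : ∀ g, Set.MapsTo (MulAut.conj g) S S)
    {s c x : G} (hc₁ : c ∈ wordValuesIn w₁ S) (hc₂ : c⁻¹ ∈ wordValuesIn w₂ S)
    (hx : IsConj ⁅s, c⁆ x) : ∃ g₁ ∈ wordValuesIn w₁ S, ∃ g₂ ∈ wordValuesIn w₂ S, x = g₁ * g₂ := by
  obtain ⟨b, rfl⟩ := isConj_iff.mp hx
  refine ⟨b * s * c * (b * s)⁻¹, mem_of_isConj hS hc₁ (isConj_iff.mpr ⟨b * s, rfl⟩),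
    b * c⁻¹ * b⁻¹, mem_of_isConj hS hc₂ (isConj_iff.mpr ⟨b, rfl⟩), ?_⟩
  rw [commutatorElement_def]
  group

end wordValuesIn

/-- The special unitary group `SU(2)`. -/
abbrev SU2 : Type := specialUnitaryGroup (Fin 2) ℂ

namespace SU2

/-- The element of `SU(2)` with first column `(a, b)`; every element is of this form. -/
def mk (a b : ℂ) (h : a * conj a + b * conj b = 1) : SU2 :=
  ⟨!![a, -conj b; b, conj a], by
    rw [mem_specialUnitaryGroup_iff, mem_unitaryGroup_iff, star_eq_conjTranspose, det_fin_two]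
    refine ⟨?_, by simpa [mul_comm (conj b)] using h⟩
    ext i j
    fin_cases i <;> fin_cases j <;> simp [Matrix.mul_apply] <;> grind⟩

theorem coe_mk (a b : ℂ) (h : a * conj a + b * conj b = 1) :
    (mk a b h : Matrix (Fin 2) (Fin 2) ℂ) = !![a, -conj b; b, conj a] := rfl

theorem exists_eq_mk (A : SU2) : ∃ a b h, A = mk a b h := by
  obtain ⟨M, hM⟩ := A
  obtain ⟨hU, hdet⟩ := mem_specialUnitaryGroup_iff.mp hM
  have hstar : star M = M.adjugate := by
    rw [← mul_one (star M), ← one_smul ℂ (1 : Matrix (Fin 2) (Fin 2) ℂ), ← hdet, ← mul_adjugate,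
      ← Matrix.mul_assoc, mem_unitaryGroup_iff'.mp hU, Matrix.one_mul]
  have h₁₁ : M 1 1 = conj (M 0 0) := by
    simpa [adjugate_fin_two] using (congrFun (congrFun hstar 0) 0).symm
  have h₀₁ : M 0 1 = -conj (M 1 0) := by
    have := congrFun (congrFun hstar 0) 1
    simp_all [adjugate_fin_two]
  refine ⟨M 0 0, M 1 0, ?_, Subtype.ext ?_⟩
  · rw [det_fin_two, h₁₁, h₀₁] at hdet
    linear_combination hdet
  · rw [coe_mk, ← h₁₁, ← h₀₁]
    exact eta_fin_two M

theorem re_trace_mk (a b : ℂ) (h : a * conj a + b * conj b = 1) :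
    (mk a b h : Matrix (Fin 2) (Fin 2) ℂ).trace.re = 2 * a.re := by
  simp [coe_mk, trace_fin_two, two_mul]

theorem sq_re_add_sq_im_eq_one {a b : ℂ} (h : a * conj a + b * conj b = 1) :
    a.re ^ 2 + a.im ^ 2 + (b.re ^ 2 + b.im ^ 2) = 1 := by
  simpa [Complex.ext_iff, sq] using congrArg Complex.re h

theorem abs_re_trace_le (A : SU2) : |(A : Matrix (Fin 2) (Fin 2) ℂ).trace.re| ≤ 2 := by
  obtain ⟨a, b, h, rfl⟩ := A.exists_eq_mk
  have := sq_re_add_sq_im_eq_one h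
  rw [re_trace_mk, abs_le]
  constructor <;> nlinarith [sq_nonneg a.im, sq_nonneg b.re, sq_nonneg b.im]

theorem eq_one_of_two_le_re_trace {A : SU2} (hA : 2 ≤ (A : Matrix (Fin 2) (Fin 2) ℂ).trace.re) :
    A = 1 := by
  obtain ⟨a, b, h, rfl⟩ := A.exists_eq_mk
  have hab := sq_re_add_sq_im_eq_one h
  rw [re_trace_mk] at hA
  have ha : a = 1 := Complex.ext (by simp; nlinarith) (by simp; nlinarith)
  have hb : b = 0 := Complex.ext (by simp; nlinarith) (by simp; nlinarith)
  subst ha hb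
  exact Subtype.ext (by simp [coe_mk, one_fin_two])

/-- The diagonal torus `z ↦ diag(z, z⁻¹)` of `SU(2)`. -/
def torus : Circle →* SU2 where
  toFun z := mk z 0 (by simp [Complex.mul_conj])
  map_one' := Subtype.ext (by simp [coe_mk, one_fin_two])
  map_mul' z z' := Subtype.ext (by simp [coe_mk])

theorem coe_torus (z : Circle) :
    (torus z : Matrix (Fin 2) (Fin 2) ℂ) = diagonal ![↑z, conj ↑z] := by
  ext i j
  fin_cases i <;> fin_cases j <;> simp [torus, coe_mk]

theorem re_trace_torus_exp (t : ℝ) :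
    (torus (Circle.exp t) : Matrix (Fin 2) (Fin 2) ℂ).trace.re = 2 * Real.cos t := by
  simp [coe_torus, Complex.exp_ofReal_mul_I_re, two_mul]

theorem re_trace_inv (A : SU2) : ((A⁻¹ : SU2) : Matrix (Fin 2) (Fin 2) ℂ).trace.re =
    (A : Matrix (Fin 2) (Fin 2) ℂ).trace.re := by
  change (A : Matrix (Fin 2) (Fin 2) ℂ)ᴴ.trace.re = _
  rw [trace_conjTranspose]
  rfl

theorem tendsto_re_trace_torus_exp_pi_div : Filter.Tendsto (fun N : ℕ =>
    (torus (Circle.exp (Real.pi / N)) : Matrix (Fin 2) (Fin 2) ℂ).trace.re)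
    Filter.atTop (nhds 2) := by
  have hcos := (Real.continuous_cos.tendsto 0).comp (tendsto_const_div_atTop_nhds_zero_nat Real.pi)
  simpa [re_trace_torus_exp, Function.comp_def] using hcos.const_mul 2

theorem exists_ofReal_mul_normalized {x : ℂ} (y : ℂ) (hx : x ≠ 0) :
    ∃ c : ℝ, c * y * conj (c * y) + c * x * conj (c * x) = 1 := by
  have hN : 0 < Complex.normSq y + Complex.normSq x :=
    add_pos_of_nonneg_of_pos (Complex.normSq_nonneg y) (Complex.normSq_pos.mpr hx)
  refine ⟨(√(Complex.normSq y + Complex.normSq x))⁻¹, ?_⟩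
  rw [Complex.mul_conj, Complex.mul_conj, Complex.normSq_mul, Complex.normSq_mul,
    Complex.normSq_ofReal, ← mul_inv, Real.mul_self_sqrt hN.le]
  norm_cast
  rw [← mul_add, inv_mul_cancel₀ hN.ne']

-- The columns of the conjugating element are eigenvectors of `A` for `z` and `z⁻¹`.
theorem isConj_torus_of_re_trace {A : SU2} {z : Circle}
    (h : (A : Matrix (Fin 2) (Fin 2) ℂ).trace.re = 2 * (z : ℂ).re) : IsConj (torus z) A := by
  obtain ⟨a, b, hab, rfl⟩ := A.exists_eq_mk
  rw [re_trace_mk] at h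
  have hz : (z : ℂ) * conj (z : ℂ) = 1 := by simp [Complex.mul_conj]
  have htr : a + conj a = z + conj (z : ℂ) := by
    rw [Complex.add_conj, Complex.add_conj]
    exact_mod_cast h
  by_cases ha : a = z
  · subst ha
    obtain rfl : b = 0 := by simpa [hz] using hab
    exact IsConj.refl _
  obtain ⟨c, hc⟩ := exists_ofReal_mul_normalized (conj b) (sub_ne_zero.mpr ha)
  refine isConj_iff.mpr ⟨mk (c * conj b) (c * (a - z)) hc, mul_inv_eq_iff_eq_mul.mpr ?_⟩
  apply Subtype.ext
  rw [Submonoid.coe_mul, Submonoid.coe_mul, coe_torus, coe_mk, coe_mk]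
  ext i j
  fin_cases i <;> fin_cases j <;> simp <;> grind

theorem isConj_torus_exp_arccos (A : SU2) :
    IsConj (torus (Circle.exp (Real.arccos ((A : Matrix (Fin 2) (Fin 2) ℂ).trace.re / 2)))) A := by
  have := abs_le.mp A.abs_re_trace_le
  refine isConj_torus_of_re_trace ?_
  rw [Circle.coe_exp, Complex.exp_ofReal_mul_I_re, Real.cos_arccos] <;> linarith

theorem isConj_of_re_trace_eq {A B : SU2}
    (h : (A : Matrix (Fin 2) (Fin 2) ℂ).trace.re = (B : Matrix (Fin 2) (Fin 2) ℂ).trace.re) :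
    IsConj A B :=
  A.isConj_torus_exp_arccos.symm.trans (h ▸ B.isConj_torus_exp_arccos)

theorem exists_sq_eq (A : SU2) : ∃ B : SU2, B ^ 2 = A := by
  obtain ⟨U, hU⟩ := isConj_iff.mp A.isConj_torus_exp_arccos
  generalize Real.arccos _ = t at hU
  refine ⟨U * torus (Circle.exp (t / 2)) * U⁻¹, ?_⟩
  rw [conj_pow, ← map_pow, sq, ← Circle.exp_add, add_halves, hU]

/-- The quarter turn, which conjugates `SU(2)` into its complex conjugate. -/
def quarterTurn : SU2 := mk 0 (-1) (by simp)

theorem map_conj_mul_quarterTurn (A : SU2) :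
    (A : Matrix (Fin 2) (Fin 2) ℂ).map conj * quarterTurn = quarterTurn * A := by
  obtain ⟨a, b, hab, rfl⟩ := A.exists_eq_mk
  ext i j
  fin_cases i <;> fin_cases j <;>
    simp [quarterTurn, coe_mk, Matrix.mul_apply, -mul_eq_mul_right_iff]

/-- The rotation by the angle `θ`, as an element of `SU(2)`. -/
noncomputable def rotation (θ : ℝ) : SU2 :=
  mk (Real.cos θ) (Real.sin θ) (by
    rw [Complex.conj_ofReal, Complex.conj_ofReal]
    exact_mod_cast by linarith [Real.cos_sq_add_sin_sq θ])

/-- The unit vector of angle `θ` in `ℝ² ⊆ ℂ²`. -/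
noncomputable def direction (θ : ℝ) : Fin 2 → ℂ := ![Real.cos θ, Real.sin θ]

/-- The orthogonal projection of `ℂ²` onto the line spanned by `direction θ`. -/
noncomputable def lineProj (θ : ℝ) : Matrix (Fin 2) (Fin 2) ℂ :=
  vecMulVec (direction θ) (direction θ)

/-- The element of `SU(2)` with eigenvalue `z` on `direction θ` and `z⁻¹` on its orthogonal. -/
noncomputable def rotatedTorus (θ : ℝ) (z : Circle) : SU2 :=
  rotation θ * torus z * (rotation θ)⁻¹

theorem coe_rotatedTorus (θ : ℝ) (z : Circle) :
    (rotatedTorus θ z : Matrix (Fin 2) (Fin 2) ℂ) =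
      (z : ℂ) • lineProj θ + conj (z : ℂ) • lineProj (θ + Real.pi / 2) := by
  change (rotation θ : Matrix (Fin 2) (Fin 2) ℂ) * torus z * (rotation θ).1ᴴ = _
  rw [rotation, coe_mk, coe_torus, lineProj, lineProj, direction, direction,
    Real.cos_add_pi_div_two, Real.sin_add_pi_div_two]
  ext i j
  fin_cases i <;> fin_cases j <;>
    simp [Matrix.mul_apply, vecMul_diagonal, -Complex.ofReal_cos, -Complex.ofReal_sin] <;> ring

theorem lineProj_add_pi (θ : ℝ) : lineProj (θ + Real.pi) = lineProj θ := by
  have hdir : direction (θ + Real.pi) = -direction θ := by simp [direction]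
  rw [lineProj, lineProj, hdir, neg_vecMulVec, vecMulVec_neg, neg_neg]

theorem rotatedTorus_add_pi_div_two (θ : ℝ) (z : Circle) :
    rotatedTorus (θ + Real.pi / 2) z = (rotatedTorus θ z)⁻¹ := by
  have hinv : (rotatedTorus θ z)⁻¹ = rotatedTorus θ z⁻¹ := by
    rw [rotatedTorus, rotatedTorus, conj_inv, map_inv]
  rw [hinv]
  apply Subtype.ext
  rw [coe_rotatedTorus, coe_rotatedTorus, add_assoc θ, add_halves, lineProj_add_pi,
    Circle.coe_inv_eq_conj, Complex.conj_conj, add_comm]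

theorem direction_dotProduct_direction (θ θ' : ℝ) :
    direction θ ⬝ᵥ direction θ' = (Real.cos (θ - θ') : ℂ) := by
  rw [Real.cos_sub]
  simp [direction]

theorem direction_ne_zero (θ : ℝ) : direction θ ≠ 0 := by
  intro h
  simpa [h] using direction_dotProduct_direction θ θ

end SU2

section
open Polynomial

variable {ι n K : Type*} [Fintype n] [DecidableEq n] [CommRing K] [IsDomain K]

-- Both sides are polynomials in `u`; compare their constant coefficients.
theorem list_prod_eq_zero_of_infinite (A B : ι → Matrix n n K) {l : List ι} (hl : l ≠ [])
    {U : Set K} (hU : U.Infinite)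
    (h : ∀ u ∈ U, (l.map fun x => A x + u ^ 2 • B x).prod = u ^ l.length • 1) :
    (l.map A).prod = 0 := by
  set q : Matrix n n K[X] := (l.map fun x => (A x).map C + (X : K[X]) ^ 2 • (B x).map C).prod
  have hq (u : K) : q.map (eval u) = (l.map fun x => A x + u ^ 2 • B x).prod := by
    change (evalRingHom u).mapMatrix q = _
    rw [map_list_prod, List.map_map]
    refine congrArg List.prod (List.map_congr_left fun x _ => ?_)
    ext i j
    simp [mul_comm (B x i j)]
  have hq_eq : q = (X ^ l.length : K[X]) • 1 := by
    ext1 i j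
    refine eq_of_infinite_eval_eq _ _ (hU.mono fun u hu => ?_)
    have := congrFun (congrFun ((hq u).trans (h u hu)) i) j
    rcases eq_or_ne i j with rfl | hij <;> simp_all
  have hlen : l.length ≠ 0 := by simpa using hl
  calc (l.map A).prod = q.map (eval 0) := by simp [hq]
    _ = 0 := by
      ext i j
      simp [hq_eq, hlen]
end

namespace SU2
variable {d : ℕ}

/-- The direction attached to a letter of a word: the generators get distinct angles in `[0, 1)`,
and the inverse of a generator gets the orthogonal direction. -/
noncomputable def letterAngle (x : Fin d × Bool) : ℝ :=
  (x.1 : ℝ) / (d + 1) + cond x.2 0 (Real.pi / 2)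

theorem cos_letterAngle_sub_ne_zero {x y : Fin d × Bool} (h : x.1 = y.1 → x.2 = y.2) :
    Real.cos (letterAngle x - letterAngle y) ≠ 0 := by
  obtain ⟨i, b⟩ := x
  obtain ⟨j, c⟩ := y
  have hd : (0 : ℝ) < d + 1 := by positivity
  have angle_mem (k : Fin d) : 0 ≤ (k : ℝ) / (d + 1) ∧ (k : ℝ) / (d + 1) < 1 := by
    refine ⟨by positivity, (div_lt_one hd).mpr ?_⟩
    exact_mod_cast k.2.trans (Nat.lt_succ_self d)
  obtain ⟨hi₀, hi₁⟩ := angle_mem i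
  obtain ⟨hj₀, hj₁⟩ := angle_mem j
  have hpi := Real.pi_gt_three
  have hcos : Real.cos ((i : ℝ) / (d + 1) - j / (d + 1)) ≠ 0 :=
    (Real.cos_pos_of_mem_Ioo ⟨by linarith, by linarith⟩).ne'
  have hsin (hbc : b ≠ c) : Real.sin ((i : ℝ) / (d + 1) - j / (d + 1)) ≠ 0 := by
    rw [Ne, Real.sin_eq_zero_iff_of_lt_of_lt (by linarith) (by linarith), ← sub_div,
      div_eq_zero_iff, sub_eq_zero, Nat.cast_inj, ← Fin.ext_iff]
    exact not_or.mpr ⟨mt h hbc, hd.ne'⟩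
  cases b <;> cases c <;>
    simp_all [letterAngle, add_sub_right_comm, ← sub_sub, Real.cos_add_pi_div_two,
      Real.cos_sub_pi_div_two]

theorem prod_lineProj_ne_zero {L : List (Fin d × Bool)} (hL : FreeGroup.IsReduced L) :
    (L.map fun x => lineProj (letterAngle x)).prod ≠ 0 := by
  suffices h : ∀ x L, FreeGroup.IsReduced (x :: L) → ∃ v : Fin 2 → ℂ, v ≠ 0 ∧
      ((x :: L).map fun x => lineProj (letterAngle x)).prod =
        vecMulVec (direction (letterAngle x)) v by
    cases L with
    | nil => simp
    | cons x L =>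
      obtain ⟨v, hv, hprod⟩ := h x L hL
      rw [hprod, Ne, vecMulVec_eq_zero]
      exact not_or.mpr ⟨direction_ne_zero _, hv⟩
  intro x L hxL
  induction L generalizing x with
  | nil => exact ⟨_, direction_ne_zero (letterAngle x), by simp [lineProj]⟩
  | cons y L ih =>
    rw [FreeGroup.isReduced_cons_cons] at hxL
    obtain ⟨v, hv, hprod⟩ := ih y hxL.2
    refine ⟨_, smul_ne_zero ?_ hv,
      by rw [List.map_cons, List.prod_cons, hprod, lineProj, vecMulVec_mul_vecMulVec]⟩
    rw [direction_dotProduct_direction]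
    exact_mod_cast cos_letterAngle_sub_ne_zero hxL.1

/-- The value of the word `w` at rotated copies of `torus z`, one for each generator. -/
noncomputable def wordCurve (w : FreeGroup (Fin d)) (z : Circle) : SU2 :=
  FreeGroup.lift (fun i => rotatedTorus (letterAngle (i, true)) z) w

variable (w : FreeGroup (Fin d))

theorem coe_wordCurve (z : Circle) :
    (wordCurve w z : Matrix (Fin 2) (Fin 2) ℂ) = (w.toWord.map fun x => (z : ℂ) •
      lineProj (letterAngle x) + conj (z : ℂ) • lineProj (letterAngle x + Real.pi / 2)).prod := by
  have hletter (x : Fin d × Bool) : cond x.2 (rotatedTorus (letterAngle (x.1, true)) z)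
      (rotatedTorus (letterAngle (x.1, true)) z)⁻¹ = rotatedTorus (letterAngle x) z := by
    obtain ⟨i, b⟩ := x
    cases b
    · simp [letterAngle, ← rotatedTorus_add_pi_div_two]
    · rfl
  rw [wordCurve]
  nth_rw 1 [← FreeGroup.mk_toWord (x := w)]
  rw [FreeGroup.lift_mk, Submonoid.coe_list_prod]
  simp only [hletter, List.map_map, Function.comp_def, coe_rotatedTorus]

theorem exists_wordCurve_ne_one (hw : w ≠ 1) : ∃ z, wordCurve w z ≠ 1 := by
  by_contra! hone
  refine prod_lineProj_ne_zero FreeGroup.isReduced_toWord <| list_prod_eq_zero_of_infinite _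
    (fun x => lineProj (letterAngle x + Real.pi / 2)) (mt FreeGroup.toWord_eq_nil_iff.mp hw)
    (U := Set.range fun z : Circle => (z : ℂ)) ?_ ?_
  · have : Infinite Circle := by
      rw [Circle.argEquiv.infinite_iff]
      exact (Set.Ioc_infinite (neg_lt_self Real.pi_pos)).to_subtype
    exact Set.infinite_range_of_injective Circle.coe_injective
  · rintro _ ⟨z : Circle, rfl⟩
    have hz : (z : ℂ) * conj (z : ℂ) = 1 := by simp [Complex.mul_conj]
    have h := congrArg Subtype.val (hone z⁻¹)
    rw [coe_wordCurve, Circle.coe_inv_eq_conj, Complex.conj_conj] at h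
    change _ = ((1 : SU2) : Matrix (Fin 2) (Fin 2) ℂ) at h
    rw [Submonoid.coe_one] at h
    rw [← h, ← List.length_map (as := w.toWord), List.smul_prod, List.map_map]
    refine congrArg List.prod (List.map_congr_left fun x _ => ?_)
    simp [smul_smul, hz, sq]

theorem continuous_re_trace_wordCurve :
    Continuous fun z => (wordCurve w z : Matrix (Fin 2) (Fin 2) ℂ).trace.re := by
  simp only [coe_wordCurve]
  refine Complex.continuous_re.comp (Continuous.matrix_trace ?_)
  exact continuous_list_prod _ fun x _ => by fun_prop

variable {w}

theorem exists_lt_two_forall_le_re_trace_mem_wordValuesIn (hw : w ≠ 1) :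
    ∃ c < 2, ∀ A : SU2, c ≤ (A : Matrix (Fin 2) (Fin 2) ℂ).trace.re →
      A ∈ wordValuesIn w Set.univ := by
  obtain ⟨z, hz⟩ := exists_wordCurve_ne_one w hw
  refine ⟨_, not_le.mp (mt eq_one_of_two_le_re_trace hz), fun A hA => ?_⟩
  have hone : wordCurve w 1 = 1 :=
    DFunLike.congr_fun (g := 1) (FreeGroup.ext_hom _ _ fun i => by simp [rotatedTorus]) w
  obtain ⟨y, hy⟩ := mem_range_of_exists_le_of_exists_ge (continuous_re_trace_wordCurve w)
    ⟨z, hA⟩ ⟨1, by simpa [hone] using (abs_le.mp A.abs_re_trace_le).2⟩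
  exact wordValuesIn.mem_of_isConj (fun _ _ _ => Set.mem_univ _) ⟨_, fun _ => Set.mem_univ _, rfl⟩
    (isConj_of_re_trace_eq hy)

end SU2

section tensorPow

variable {R S ι n : Type*} [CommRing R] [CommRing S] [Fintype ι] [DecidableEq ι]
  [Fintype n] [DecidableEq n]

variable (ι) in
/-- The tensor power `A ↦ A ⊗ ⋯ ⊗ A`, with factors indexed by `ι`, in the basis `ι → n`. -/
def tensorPow : Matrix n n R →* Matrix (ι → n) (ι → n) R where
  toFun A := of fun s t => ∏ i, A (s i) (t i)
  map_one' := by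
    ext s t
    simp [Matrix.one_apply, Fintype.prod_ite_zero, funext_iff]
  map_mul' A B := by
    ext s t
    simp only [Matrix.mul_apply, of_apply, Finset.prod_univ_sum, Fintype.piFinset_univ,
      Finset.prod_mul_distrib]

theorem tensorPow_apply (A : Matrix n n R) (s t : ι → n) :
    tensorPow ι A s t = ∏ i, A (s i) (t i) := rfl

theorem tensorPow_map (f : R →+* S) (A : Matrix n n R) :
    tensorPow ι (A.map f) = (tensorPow ι A).map f := by
  ext s t
  simp [tensorPow_apply]

theorem tensorPow_conjTranspose [StarRing R] (A : Matrix n n R) :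
    tensorPow ι Aᴴ = (tensorPow ι A)ᴴ := by
  ext s t
  simp [tensorPow_apply]

theorem tensorPow_diagonal (d : n → R) :
    tensorPow ι (diagonal d) = diagonal fun s => ∏ i, d (s i) := by
  ext s t
  simp [tensorPow_apply, diagonal_apply, Fintype.prod_ite_zero, funext_iff]

theorem tensorPow_comp_perm (A : Matrix n n R) (σ : Equiv.Perm ι) (s t : ι → n) :
    tensorPow ι A (s ∘ σ) (t ∘ σ) = tensorPow ι A s t :=
  Equiv.prod_comp σ fun i => A (s i) (t i)

end tensorPow

section fiberIsometry

variable {X Y : Type*} [Fintype X] [DecidableEq Y]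

/-- The isometry `ℂ^Y → ℂ^X` sending a basis vector `y` to the normalized indicator function of the
fibre of `f` above `y`. -/
noncomputable def fiberIsometry (f : X → Y) : Matrix X Y ℂ :=
  of fun x y => if f x = y then ((√(#{x' | f x' = y} : ℝ))⁻¹ : ℝ) else 0

theorem fiberIsometry_apply (f : X → Y) (x : X) (y : Y) :
    fiberIsometry f x y = if f x = y then (((√(#{x' | f x' = y} : ℝ))⁻¹ : ℝ) : ℂ) else 0 := rfl

theorem fiberIsometry_map_conj (f : X → Y) :
    (fiberIsometry f).map conj = fiberIsometry f := by
  ext x y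
  simp [fiberIsometry_apply, apply_ite conj]

theorem fiberIsometry_apply_apply {f : X → Y} {e : Equiv.Perm X} {e' : Equiv.Perm Y}
    (h : ∀ x, f (e x) = e' (f x)) (x : X) (y : Y) :
    fiberIsometry f (e x) (e' y) = fiberIsometry f x y := by
  have hcard : #{x' | f x' = e' y} = #{x' | f x' = y} :=
    (Finset.card_equiv e (by simp [h])).symm
  simp [fiberIsometry_apply, h, hcard]

theorem diagonal_comp_mul_fiberIsometry [DecidableEq X] [Fintype Y] (f : X → Y) (g : Y → ℂ) :
    diagonal (fun x => g (f x)) * fiberIsometry f = fiberIsometry f * diagonal g := by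
  ext x y
  rw [diagonal_mul, mul_diagonal, fiberIsometry_apply]
  split_ifs with h
  · rw [h, mul_comm]
  · simp

theorem inv_sqrt_mul_inv_sqrt {c : ℕ} :
    (((√c)⁻¹ : ℝ) : ℂ) * (((√c)⁻¹ : ℝ) : ℂ) = (c : ℂ)⁻¹ := by
  rw [← Complex.ofReal_mul, ← mul_inv, Real.mul_self_sqrt c.cast_nonneg]
  push_cast
  rfl

theorem transpose_fiberIsometry_mul {f : X → Y} (hf : Function.Surjective f) :
    (fiberIsometry f)ᵀ * fiberIsometry f = 1 := by
  ext y y'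
  simp only [Matrix.mul_apply, transpose_apply, fiberIsometry_apply]
  rcases eq_or_ne y y' with rfl | hne
  · obtain ⟨x, rfl⟩ := hf y
    have hcard : (#{x' | f x' = f x} : ℂ) ≠ 0 :=
      Nat.cast_ne_zero.mpr (Finset.card_ne_zero_of_mem (by simp : x ∈ _))
    simp only [ite_mul, zero_mul, mul_ite, mul_zero, ← ite_and, and_self, inv_sqrt_mul_inv_sqrt,
      ← Finset.sum_filter, Finset.sum_const, nsmul_eq_mul, one_apply_eq]
    exact mul_inv_cancel₀ hcard
  · rw [one_apply_ne hne]
    exact Finset.sum_eq_zero fun x _ => by grind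

theorem fiberIsometry_mul_transpose_mul [Fintype Y] {Z : Type*} {f : X → Y} {F : Matrix X Z ℂ}
    (hF : ∀ x x', f x = f x' → F x = F x') :
    fiberIsometry f * ((fiberIsometry f)ᵀ * F) = F := by
  ext x z
  have hcard : (#{x' | f x' = f x} : ℂ) ≠ 0 :=
    Nat.cast_ne_zero.mpr (Finset.card_ne_zero_of_mem (by simp : x ∈ _))
  simp only [Matrix.mul_apply, transpose_apply, fiberIsometry_apply, ite_mul, zero_mul,
    Finset.sum_ite_eq, Finset.mem_univ, if_true]
  have hsum : ∑ x' with f x' = f x, (((√(#{x' | f x' = f x} : ℝ))⁻¹ : ℝ) : ℂ) * F x' z =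
      #{x' | f x' = f x} * ((((√(#{x' | f x' = f x} : ℝ))⁻¹ : ℝ) : ℂ) * F x z) := by
    rw [← nsmul_eq_mul, ← Finset.sum_const]
    exact Finset.sum_congr rfl fun x' hx' => by rw [hF x' x (Finset.mem_filter.mp hx').2]
  rw [← Finset.sum_filter, hsum, mul_left_comm, ← mul_assoc _ _ (F x z), inv_sqrt_mul_inv_sqrt,
    mul_inv_cancel_left₀ hcard]

end fiberIsometry

section symPow

variable {N : ℕ}

/-- The number of entries of a binary sequence equal to `1`. -/
def onesCount (s : Fin N → Fin 2) : Fin (N + 1) :=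
  ⟨#{i | s i = 1}, Nat.lt_succ_of_le (card_finset_fin_le _)⟩

theorem onesCount_surjective : Function.Surjective (onesCount (N := N)) := by
  intro k
  refine ⟨fun i => if (i : ℕ) < k then 1 else 0, Fin.ext ?_⟩
  have := k.is_le
  simp [onesCount, Fin.card_filter_val_lt, this]

theorem onesCount_eq_iff {s t : Fin N → Fin 2} :
    onesCount s = onesCount t ↔ ∃ σ : Equiv.Perm (Fin N), s = t ∘ σ := by
  constructor
  · intro h
    have hcard : Fintype.card {i // s i = 1} = Fintype.card {i // t i = 1} := by
      rw [Fintype.card_subtype, Fintype.card_subtype]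
      exact congrArg Fin.val h
    let e := Fintype.equivOfCardEq hcard
    refine ⟨e.extendSubtype, funext fun i => ?_⟩
    have hmem := e.extendSubtype_mem i
    have hnotMem := e.extendSubtype_not_mem i
    simp only [Function.comp_apply]
    grind
  · rintro ⟨σ, rfl⟩
    refine Fin.ext ?_
    simp only [onesCount]
    exact Finset.card_equiv σ (by simp)

theorem card_filter_ne_one (s : Fin N → Fin 2) : #{i | s i ≠ 1} = N - onesCount s := by
  simp [onesCount, ← Finset.compl_filter, Finset.card_compl]

theorem prod_comp_eq_pow_onesCount {R : Type*} [CommMonoid R] (d : Fin 2 → R) (s : Fin N → Fin 2) :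
    ∏ i, d (s i) = d 0 ^ (N - onesCount s : ℕ) * d 1 ^ (onesCount s : ℕ) := by
  have hd : ∀ i, d (s i) = if s i = 1 then d 1 else d 0 := fun i => by grind
  rw [Finset.prod_congr rfl fun i _ => hd i, Finset.prod_ite, Finset.prod_const, Finset.prod_const,
    card_filter_ne_one, mul_comm]
  rfl

theorem onesCount_rev (s : Fin N → Fin 2) :
    onesCount (fun i => (s i).rev) = (onesCount s).rev := by
  refine Fin.ext ?_
  rw [Fin.val_rev, Nat.add_sub_add_right, ← card_filter_ne_one s]
  change #{i | (s i).rev = 1} = _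
  refine congrArg Finset.card (Finset.filter_congr fun i _ => ?_)
  generalize s i = c
  decide +revert

variable (N) in
/-- The matrix whose columns are the weight vectors of the symmetric tensors in `(ℂ²)^{⊗ N}`, as an
orthonormal basis. -/
noncomputable abbrev weightBasis : Matrix (Fin N → Fin 2) (Fin (N + 1)) ℂ := fiberIsometry onesCount

theorem tensorPow_mul_weightBasis_congr (A : Matrix (Fin 2) (Fin 2) ℂ) (s t : Fin N → Fin 2)
    (h : onesCount s = onesCount t) :
    (tensorPow (Fin N) A * weightBasis N) s = (tensorPow (Fin N) A * weightBasis N) t := by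
  obtain ⟨σ, rfl⟩ := onesCount_eq_iff.mp h
  ext k
  rw [Matrix.mul_apply, Matrix.mul_apply]
  refine (Equiv.sum_comp (σ.symm.arrowCongr (.refl (Fin 2))) _).symm.trans ?_
  refine Finset.sum_congr rfl fun s _ => ?_
  congr 1
  · exact tensorPow_comp_perm A σ t s
  · exact fiberIsometry_apply_apply (e' := .refl _)
      (fun s => (onesCount_eq_iff.mpr ⟨σ, rfl⟩ :
        onesCount (σ.symm.arrowCongr (.refl _) s) = onesCount s)) s k

variable (N) in
/-- The symmetric power `Sym^N` of the standard representation, in the orthonormal basis of weight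
vectors: the compression of the tensor power to the symmetric tensors. -/
noncomputable def symPow :
    Matrix (Fin 2) (Fin 2) ℂ →* Matrix (Fin (N + 1)) (Fin (N + 1)) ℂ where
  toFun A := (weightBasis N)ᵀ * (tensorPow (Fin N) A * weightBasis N)
  map_one' := by
    rw [map_one, Matrix.one_mul, transpose_fiberIsometry_mul onesCount_surjective]
  map_mul' A B := by
    rw [map_mul]
    simp only [Matrix.mul_assoc,
      fiberIsometry_mul_transpose_mul (tensorPow_mul_weightBasis_congr B)]

theorem symPow_apply (A : Matrix (Fin 2) (Fin 2) ℂ) :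
    symPow N A = (weightBasis N)ᵀ * (tensorPow (Fin N) A * weightBasis N) := rfl

theorem symPow_map_conj (A : Matrix (Fin 2) (Fin 2) ℂ) :
    symPow N (A.map conj) = (symPow N A).map conj := by
  rw [symPow_apply, symPow_apply, tensorPow_map, Matrix.map_mul, Matrix.map_mul, transpose_map,
    fiberIsometry_map_conj]

theorem symPow_conjTranspose (A : Matrix (Fin 2) (Fin 2) ℂ) :
    symPow N Aᴴ = (symPow N A)ᴴ := by
  have hstar : (weightBasis N)ᴴ = (weightBasis N)ᵀ := by
    conv_rhs => rw [weightBasis, ← fiberIsometry_map_conj]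
    rfl
  simp only [symPow_apply, tensorPow_conjTranspose, conjTranspose_mul, ← hstar,
    conjTranspose_conjTranspose, Matrix.mul_assoc]

theorem symPow_diagonal (d : Fin 2 → ℂ) :
    symPow N (diagonal d) = diagonal fun k : Fin (N + 1) => d 0 ^ (N - k : ℕ) * d 1 ^ (k : ℕ) := by
  rw [symPow_apply, tensorPow_diagonal]
  simp only [prod_comp_eq_pow_onesCount]
  rw [diagonal_comp_mul_fiberIsometry onesCount fun k => d 0 ^ (N - k : ℕ) * d 1 ^ (k : ℕ),
    ← Matrix.mul_assoc, transpose_fiberIsometry_mul onesCount_surjective, Matrix.one_mul]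

theorem tensorPow_quarterTurn :
    tensorPow (Fin N) (SU2.quarterTurn : Matrix (Fin 2) (Fin 2) ℂ) =
      diagonal (fun s => (-1) ^ (onesCount s : ℕ)) *
        Equiv.Perm.permMatrix ℂ (Equiv.piCongrRight fun _ : Fin N => Fin.revPerm (n := 2)) := by
  have hJ : ∀ a b, (SU2.quarterTurn : Matrix (Fin 2) (Fin 2) ℂ) a b =
      if a.rev = b then (-1) ^ (a : ℕ) else 0 := by
    intro a b
    fin_cases a <;> fin_cases b <;> simp [SU2.quarterTurn, SU2.coe_mk, Fin.rev]
  ext s t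
  simp only [tensorPow_apply, hJ, Fintype.prod_ite_zero,
    prod_comp_eq_pow_onesCount fun a : Fin 2 => (-1 : ℂ) ^ (a : ℕ)]
  simp [diagonal_mul, Equiv.Perm.permMatrix, PEquiv.toMatrix_apply, funext_iff]

theorem symPow_quarterTurn :
    symPow N (SU2.quarterTurn : Matrix (Fin 2) (Fin 2) ℂ) =
      diagonal (fun k : Fin (N + 1) => (-1) ^ (k : ℕ)) *
        Equiv.Perm.permMatrix ℂ (Fin.revPerm (n := N + 1)) := by
  have hflip : Equiv.Perm.permMatrix ℂ (Equiv.piCongrRight fun _ : Fin N => Fin.revPerm (n := 2)) *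
      weightBasis N = weightBasis N * Equiv.Perm.permMatrix ℂ (Fin.revPerm (n := N + 1)) := by
    rw [Equiv.Perm.permMatrix, Equiv.Perm.permMatrix, PEquiv.toMatrix_toPEquiv_mul,
      PEquiv.mul_toMatrix_toPEquiv]
    ext s k
    have h := fiberIsometry_apply_apply (e := Equiv.piCongrRight fun _ => Fin.revPerm)
      (e' := Fin.revPerm) (onesCount_rev (N := N)) s k.rev
    simpa using h
  rw [symPow_apply, tensorPow_quarterTurn, Matrix.mul_assoc, hflip, ← Matrix.mul_assoc (diagonal _),
    diagonal_comp_mul_fiberIsometry onesCount fun k => (-1) ^ (k : ℕ), Matrix.mul_assoc,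
    ← Matrix.mul_assoc, transpose_fiberIsometry_mul onesCount_surjective, Matrix.one_mul]

end symPow

section orthogonal

variable {I J K L : Type*} [Fintype I] [DecidableEq I] [Fintype J] [DecidableEq J]
  [Fintype K] [DecidableEq K] [Fintype L] [DecidableEq L]

/-- Renaming the coordinates along an equivalence, as an isomorphism of orthogonal groups. -/
def orthogonalReindex (e : I ≃ J) : orthogonalGroup I ℝ ≃* orthogonalGroup J ℝ where
  toFun A := ⟨(A : Matrix I I ℝ).reindex e e, by
    rw [mem_orthogonalGroup_iff, transpose_reindex, reindex_apply, reindex_apply,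
      submatrix_mul_equiv, (mem_orthogonalGroup_iff I ℝ).mp A.2, submatrix_one_equiv]⟩
  invFun B := ⟨(B : Matrix J J ℝ).reindex e.symm e.symm, by
    rw [mem_orthogonalGroup_iff, transpose_reindex, reindex_apply, reindex_apply,
      submatrix_mul_equiv, (mem_orthogonalGroup_iff J ℝ).mp B.2, submatrix_one_equiv]⟩
  left_inv A := by ext; simp
  right_inv B := by ext; simp
  map_mul' A B := Subtype.ext (submatrix_mul_equiv _ _ _ e.symm _).symm

theorem det_orthogonalReindex (e : I ≃ J) (A : orthogonalGroup I ℝ) :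
    (orthogonalReindex e A : Matrix J J ℝ).det = (A : Matrix I I ℝ).det :=
  det_reindex_self e _

/-- The block-diagonal embedding `O(I) × O(K) → O(I ⊕ K)`. -/
def orthogonalBlockDiag :
    orthogonalGroup I ℝ × orthogonalGroup K ℝ →* orthogonalGroup (I ⊕ K) ℝ where
  toFun A := ⟨fromBlocks A.1 0 0 A.2, by
    rw [mem_orthogonalGroup_iff, fromBlocks_transpose, fromBlocks_multiply,
      (mem_orthogonalGroup_iff I ℝ).mp A.1.2, (mem_orthogonalGroup_iff K ℝ).mp A.2.2]
    simp⟩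
  map_one' := Subtype.ext fromBlocks_one
  map_mul' A B := Subtype.ext (by simp [fromBlocks_multiply])

theorem coe_orthogonalBlockDiag (A : orthogonalGroup I ℝ × orthogonalGroup K ℝ) :
    (orthogonalBlockDiag A : Matrix (I ⊕ K) (I ⊕ K) ℝ) = fromBlocks A.1 0 0 A.2 := rfl

theorem det_orthogonalBlockDiag (A : orthogonalGroup I ℝ × orthogonalGroup K ℝ) :
    (orthogonalBlockDiag A : Matrix (I ⊕ K) (I ⊕ K) ℝ).det =
      (A.1 : Matrix I I ℝ).det * (A.2 : Matrix K K ℝ).det :=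
  det_fromBlocks_zero₁₂ _ _ _

/-- The permutation matrices, as a homomorphism to the orthogonal group; the matrix of `σ` sends
the basis vector `i` to `σ i`. -/
def orthogonalPerm : Equiv.Perm I →* orthogonalGroup I ℝ where
  toFun σ := ⟨σ⁻¹.permMatrix ℝ, by
    rw [mem_orthogonalGroup_iff, transpose_permMatrix, ← permMatrix_mul]
    simp⟩
  map_one' := Subtype.ext (by simp)
  map_mul' σ τ := Subtype.ext (by simp [permMatrix_mul])

theorem coe_orthogonalPerm (σ : Equiv.Perm I) :
    (orthogonalPerm σ : Matrix I I ℝ) = σ⁻¹.permMatrix ℝ := rfl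

theorem orthogonalReindex_sumCongr (e : I ≃ J) (f : K ≃ L) (A : orthogonalGroup I ℝ)
    (B : orthogonalGroup K ℝ) :
    orthogonalReindex (e.sumCongr f) (orthogonalBlockDiag (A, B)) =
      orthogonalBlockDiag (orthogonalReindex e A, orthogonalReindex f B) := by
  ext (i | i) (j | j) <;> rfl

theorem orthogonalReindex_sumAssoc (A : orthogonalGroup I ℝ) (B : orthogonalGroup J ℝ)
    (C : orthogonalGroup K ℝ) :
    orthogonalReindex (Equiv.sumAssoc I J K)
        (orthogonalBlockDiag (orthogonalBlockDiag (A, B), C)) =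
      orthogonalBlockDiag (A, orthogonalBlockDiag (B, C)) := by
  ext (i | i | i) (j | j | j) <;> rfl

theorem orthogonalReindex_orthogonalPerm (e : I ≃ J) (σ : Equiv.Perm I) :
    orthogonalReindex e (orthogonalPerm σ) = orthogonalPerm (e.permCongr σ) := by
  refine Subtype.ext (Matrix.ext fun i j => ?_)
  change σ⁻¹.permMatrix ℝ (e.symm i) (e.symm j) = (e.permCongr σ)⁻¹.permMatrix ℝ i j
  have hij : σ⁻¹ (e.symm i) = e.symm j ↔ (e.permCongr σ)⁻¹ i = j := by
    rw [Equiv.Perm.inv_eq_iff_eq, Equiv.Perm.inv_eq_iff_eq, Equiv.permCongr_apply,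
      Equiv.symm_apply_eq]
  simp only [Equiv.Perm.permMatrix, PEquiv.toMatrix_apply, Equiv.toPEquiv_apply,
    Option.mem_some_iff, hij]

theorem det_eq_of_isConj {g h : orthogonalGroup I ℝ} (hgh : IsConj g h) :
    (h : Matrix I I ℝ).det = (g : Matrix I I ℝ).det := by
  obtain ⟨s, rfl⟩ := isConj_iff.mp hgh
  have hs : (s : Matrix I I ℝ).det * ((s⁻¹ : orthogonalGroup I ℝ) : Matrix I I ℝ).det = 1 := by
    rw [← det_mul, ← UnitaryGroup.mul_val, mul_inv_cancel, UnitaryGroup.one_val, det_one]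
  rw [UnitaryGroup.mul_val, UnitaryGroup.mul_val, det_mul, det_mul, mul_right_comm, hs, one_mul]

theorem mapsTo_conj_SO {n : ℕ} (s : orthogonalGroup (Fin n) ℝ) :
    Set.MapsTo (MulAut.conj s) (SO n) (SO n) := fun g hg => by
  have hdet : (s * g * s⁻¹).1.det = g.1.det := det_eq_of_isConj (isConj_iff.mpr ⟨s, rfl⟩)
  exact hdet.trans hg

theorem det_eq_one_of_forall_exists_sq {G : Type*} [Group G]
    (hG : ∀ g : G, ∃ h, h ^ 2 = g) (ρ : G →* orthogonalGroup I ℝ) (g : G) :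
    (ρ g : Matrix I I ℝ).det = 1 := by
  obtain ⟨h, rfl⟩ := hG g
  have hdet : (ρ h : Matrix I I ℝ).det * (ρ h : Matrix I I ℝ).det = 1 := by
    simpa using congrArg det ((mem_orthogonalGroup_iff I ℝ).mp (ρ h).2)
  rw [map_pow, pow_two]
  exact (det_mul _ _).trans hdet

theorem exists_orthogonal_map_ofReal_eq {G : Type*} [Group G] (f : G →* Matrix I I ℂ)
    (hreal : ∀ g, (f g).map conj = f g) (hunitary : ∀ g, f g * (f g)ᴴ = 1) :
    ∃ ρ : G →* orthogonalGroup I ℝ, ∀ g, (ρ g : Matrix I I ℝ).map Complex.ofReal = f g := by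
  have hinj : Function.Injective fun M : Matrix I I ℝ => M.map Complex.ofReal :=
    Matrix.map_injective Complex.ofReal_injective
  have hre : ∀ g, ((f g).map Complex.re).map Complex.ofReal = f g := fun g => by
    ext i j
    exact Complex.conj_eq_iff_re.mp (congrFun (congrFun (hreal g) i) j)
  have hmul : ∀ M N : Matrix I I ℝ, (M * N).map Complex.ofReal =
      M.map Complex.ofReal * N.map Complex.ofReal :=
    fun M N => Matrix.map_mul (f := Complex.ofRealHom)
  refine ⟨⟨⟨fun g => ⟨(f g).map Complex.re, ?_⟩, ?_⟩, ?_⟩, hre⟩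
  · refine (mem_orthogonalGroup_iff I ℝ).mpr (hinj ?_)
    have hstar : ((f g).map Complex.re)ᵀ.map Complex.ofReal = (f g)ᴴ := by
      conv_rhs => rw [← hre g]
      ext
      simp
    simp only [hmul, hre, hstar, hunitary]
    simp
  · refine Subtype.ext (hinj ?_)
    simp
  · refine fun g h => Subtype.ext (hinj ?_)
    simp only [hre, hmul, map_mul, Submonoid.coe_mul]
    rw [← map_mul, hre]

end orthogonal

section coxeterEigenbasis

variable {N : ℕ}

variable (N) in
/-- The square roots of the weights `1 / (2 * N), 1 / N, …, 1 / N, 1 / (2 * N)` of the trapezoidal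
rule. -/
noncomputable def sqrtTrapezoidWeight (k : Fin (N + 1)) : ℝ :=
  √(((if k = 0 then 0 else 1) + (if k = Fin.last N then 0 else 1)) / (2 * N))

theorem sqrtTrapezoidWeight_rev (k : Fin (N + 1)) :
    sqrtTrapezoidWeight N k.rev = sqrtTrapezoidWeight N k := by
  simp [sqrtTrapezoidWeight, Fin.rev_eq_iff, add_comm]

variable (N) in
/-- The orthonormal eigenbasis of the cyclic shift of `ℂ^N` for the eigenvalues `-ζ ^ k`, where `ζ`
is a primitive `N`-th root of unity; the eigenvalue `-1` is listed both first and last, each time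
with its eigenvector divided by `√2`. -/
noncomputable def shiftEigenbasis (ζ : ℂ) : Matrix (Fin (N + 1)) (Fin N) ℂ :=
  of fun k x => sqrtTrapezoidWeight N k * (-ζ ^ (k : ℕ)) ^ (x : ℕ)

theorem shiftEigenbasis_apply (ζ : ℂ) (k : Fin (N + 1)) (x : Fin N) :
    shiftEigenbasis N ζ k x = sqrtTrapezoidWeight N k * (-ζ ^ (k : ℕ)) ^ (x : ℕ) := rfl

variable (N) in
/-- The unit column `(-i, 0, …, 0, i) / √2`. -/
noncomputable def endsColumn : Matrix (Fin (N + 1)) (Fin 1) ℂ :=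
  of fun k _ => (if k = Fin.last N then 1 else if k = 0 then -1 else 0) * (Complex.I * ((√2)⁻¹ : ℝ))

theorem endsColumn_apply (k : Fin (N + 1)) (x : Fin 1) :
    endsColumn N k x = (if k = Fin.last N then 1 else if k = 0 then -1 else 0) *
      (Complex.I * ((√2)⁻¹ : ℝ)) := rfl

variable (N) in
/-- An orthonormal eigenbasis of the cyclic shift of `ℂ^N` extended by `-1` on one more coordinate.
The two eigenvectors with eigenvalue `-1` are chosen complex conjugate to each other. -/
noncomputable def coxeterEigenbasis (ζ : ℂ) : Matrix (Fin (N + 1)) (Fin N ⊕ Fin 1) ℂ :=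
  fromCols (shiftEigenbasis N ζ) (endsColumn N)

/-- The cyclic shift of the first `N` coordinates of `ℝ^(N + 1)`, extended by `-1` on the last one:
for even `N`, a Coxeter element of `SO(N + 1)`. -/
noncomputable def coxeterElement (N : ℕ) : orthogonalGroup (Fin N ⊕ Fin 1) ℝ :=
  orthogonalBlockDiag (orthogonalPerm (finRotate N), -1)

theorem coxeterElement_map_ofReal :
    (coxeterElement N : Matrix (Fin N ⊕ Fin 1) (Fin N ⊕ Fin 1) ℝ).map Complex.ofReal =
      fromBlocks ((finRotate N)⁻¹.permMatrix ℂ) 0 0 (-1) := by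
  rw [coxeterElement, coe_orthogonalBlockDiag, fromBlocks_map, coe_orthogonalPerm]
  congr 1
  · exact PEquiv.map_toMatrix Complex.ofRealHom _
  · change (-1 : Matrix (Fin 1) (Fin 1) ℝ).map Complex.ofReal = -1
    ext i j
    simp [one_apply, apply_ite]

theorem sum_sqrtTrapezoidWeight_sq_mul_pow (q : ℂ) :
    ∑ k, (sqrtTrapezoidWeight N k : ℂ) ^ 2 * q ^ (k : ℕ) =
      (q + 1) / (2 * N) * ∑ k ∈ Finset.range N, q ^ k := by
  have hsq : ∀ k, (sqrtTrapezoidWeight N k : ℂ) ^ 2 =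
      ((if k = 0 then 0 else 1) + (if k = Fin.last N then 0 else 1)) / (2 * N) := fun k => by
    rw [sqrtTrapezoidWeight, ← Complex.ofReal_pow, Real.sq_sqrt (by positivity)]
    push_cast [apply_ite Complex.ofReal]
    rfl
  simp only [hsq, add_div, add_mul, Finset.sum_add_distrib]
  rw [Fin.sum_univ_succ, Fin.sum_univ_castSucc]
  simp [Fin.castSucc_ne_last, Fin.succ_ne_zero, ← Finset.mul_sum, pow_succ, ← Finset.sum_mul,
    Fin.sum_univ_eq_sum_range (fun k => q ^ k)]
  ring

variable [NeZero N]

theorem sum_mul_endsColumn (f : Fin (N + 1) → ℂ) (x : Fin 1) :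
    ∑ k, f k * endsColumn N k x = (f (Fin.last N) - f 0) * (Complex.I * ((√2)⁻¹ : ℝ)) := by
  have hne : Fin.last N ≠ 0 := Fin.last_pos'.ne'
  rw [Finset.sum_eq_add_of_mem (Fin.last N) 0 (Finset.mem_univ _) (Finset.mem_univ _) hne]
  · simp [endsColumn_apply, hne.symm]
    ring
  · intro k _ hk
    simp [endsColumn_apply, hk]

theorem conjTranspose_endsColumn_mul : (endsColumn N)ᴴ * endsColumn N = 1 := by
  have hsq : ((√2 : ℝ) : ℂ) ^ 2 = 2 := by exact_mod_cast Real.sq_sqrt zero_le_two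
  have hne : (0 : Fin (N + 1)) ≠ Fin.last N := Fin.last_pos'.ne
  ext x y
  rw [Matrix.mul_apply, sum_mul_endsColumn, Subsingleton.elim x y, one_apply_eq]
  simp [endsColumn_apply, hne]
  field_simp
  rw [hsq, Complex.I_sq]
  norm_num

variable {ζ : ℂ} (hζ : IsPrimitiveRoot ζ N)
include hζ

theorem conj_mul_self_of_isPrimitiveRoot : conj ζ * ζ = 1 := by
  rw [Complex.conj_mul', hζ.norm'_eq_one (NeZero.ne N)]
  simp

theorem conjTranspose_shiftEigenbasis_mul :
    (shiftEigenbasis N ζ)ᴴ * shiftEigenbasis N ζ = 1 := by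
  have hN : (N : ℂ) ≠ 0 := Nat.cast_ne_zero.mpr (NeZero.ne N)
  ext x y
  have hsum : ((shiftEigenbasis N ζ)ᴴ * shiftEigenbasis N ζ) x y = (-1) ^ (x + y : ℕ) *
      ∑ k, (sqrtTrapezoidWeight N k : ℂ) ^ 2 * (conj ζ ^ (x : ℕ) * ζ ^ (y : ℕ)) ^ (k : ℕ) := by
    rw [Matrix.mul_apply, Finset.mul_sum]
    refine Finset.sum_congr rfl fun k _ => ?_
    rw [conjTranspose_apply, ← starRingEnd_apply, shiftEigenbasis_apply, shiftEigenbasis_apply]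
    simp only [map_mul, map_pow, map_neg, map_one, Complex.conj_ofReal, neg_pow (_ ^ _)]
    ring
  have hunit : conj ζ ^ (x : ℕ) * ζ ^ (x : ℕ) = 1 := by
    rw [← mul_pow, conj_mul_self_of_isPrimitiveRoot hζ, one_pow]
  have hinj : conj ζ ^ (x : ℕ) * ζ ^ (y : ℕ) = 1 → x = y := fun h => by
    refine Fin.ext (hζ.pow_inj x.2 y.2 ?_)
    linear_combination (exp := 1) -ζ ^ (x : ℕ) * h + ζ ^ (y : ℕ) * hunit
  rw [hsum, sum_sqrtTrapezoidWeight_sq_mul_pow]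
  rcases eq_or_ne x y with rfl | hxy
  · simp [← mul_pow, conj_mul_self_of_isPrimitiveRoot hζ, ← two_mul]
    field_simp
  · rw [one_apply_ne hxy, geom_sum_eq (mt hinj hxy)]
    simp [mul_pow, ← pow_mul, mul_comm _ N]
    simp [pow_mul, ← map_pow, hζ.pow_eq_one]

theorem conjTranspose_shiftEigenbasis_mul_endsColumn :
    (shiftEigenbasis N ζ)ᴴ * endsColumn N = 0 := by
  ext x y
  rw [Matrix.mul_apply, sum_mul_endsColumn]
  have h := sqrtTrapezoidWeight_rev (0 : Fin (N + 1))
  rw [Fin.rev_zero] at h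
  simp [shiftEigenbasis_apply, h, hζ.pow_eq_one]

theorem conjTranspose_coxeterEigenbasis_mul :
    (coxeterEigenbasis N ζ)ᴴ * coxeterEigenbasis N ζ = 1 := by
  have hends : (endsColumn N)ᴴ * shiftEigenbasis N ζ = 0 := by
    rw [← conjTranspose_conjTranspose (shiftEigenbasis N ζ), ← conjTranspose_mul,
      conjTranspose_shiftEigenbasis_mul_endsColumn hζ, conjTranspose_zero]
  rw [coxeterEigenbasis, conjTranspose_fromCols_eq_fromRows_conjTranspose, fromRows_mul_fromCols,
    conjTranspose_shiftEigenbasis_mul hζ, conjTranspose_shiftEigenbasis_mul_endsColumn hζ, hends,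
    conjTranspose_endsColumn_mul, fromBlocks_one]

theorem coxeterEigenbasis_map_conj :
    (coxeterEigenbasis N ζ).map conj =
      Equiv.Perm.permMatrix ℂ (Fin.revPerm (n := N + 1)) * coxeterEigenbasis N ζ := by
  have hne : (0 : Fin (N + 1)) ≠ Fin.last N := Fin.last_pos'.ne
  have hrev : ∀ k : Fin (N + 1), conj ζ ^ (k : ℕ) = ζ ^ (k.rev : ℕ) := fun k => by
    have hk : ζ ^ (k.rev : ℕ) * ζ ^ (k : ℕ) = 1 := by
      rw [← pow_add, Fin.val_rev, Nat.add_sub_add_right, Nat.sub_add_cancel k.is_le, hζ.pow_eq_one]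
    rw [← mul_one (conj ζ ^ (k : ℕ)), ← hk, mul_left_comm, ← mul_pow,
      conj_mul_self_of_isPrimitiveRoot hζ, one_pow, mul_one]
  rw [Equiv.Perm.permMatrix, PEquiv.toMatrix_toPEquiv_mul]
  ext k (x | x)
  · simp [coxeterEigenbasis, shiftEigenbasis_apply, sqrtTrapezoidWeight_rev, hrev]
  · rcases eq_or_ne k (Fin.last N) with rfl | hlast
    · simp [coxeterEigenbasis, endsColumn_apply, hne]
    rcases eq_or_ne k 0 with rfl | hzero
    · simp [coxeterEigenbasis, endsColumn_apply, hne]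
    · simp [coxeterEigenbasis, endsColumn_apply, Fin.rev_eq_iff, hlast, hzero]

omit [NeZero N] in
theorem coxeterEigenbasis_mul_coxeterElement (hN : Even N) :
    coxeterEigenbasis N ζ *
        (coxeterElement N : Matrix (Fin N ⊕ Fin 1) (Fin N ⊕ Fin 1) ℝ).map Complex.ofReal =
      diagonal (fun k : Fin (N + 1) => -ζ ^ (k : ℕ)) * coxeterEigenbasis N ζ := by
  have hpow : ∀ k : Fin (N + 1), (-ζ ^ (k : ℕ)) ^ N = 1 := fun k => by
    rw [hN.neg_pow, ← pow_mul, mul_comm, pow_mul, hζ.pow_eq_one, one_pow]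
  have hshift : shiftEigenbasis N ζ * (finRotate N)⁻¹.permMatrix ℂ =
      diagonal (fun k : Fin (N + 1) => -ζ ^ (k : ℕ)) * shiftEigenbasis N ζ := by
    rw [Equiv.Perm.permMatrix, PEquiv.mul_toMatrix_toPEquiv]
    ext k x
    rw [diagonal_mul, shiftEigenbasis_apply, submatrix_apply, shiftEigenbasis_apply]
    have hx : (-ζ ^ (k : ℕ)) ^ (finRotate N x : ℕ) = (-ζ ^ (k : ℕ)) ^ ((x : ℕ) + 1) := by
      rw [finRotate_apply, Fin.val_add, ← pow_eq_pow_mod _ (hpow k), pow_add, pow_add, Fin.val_one',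
        ← pow_eq_pow_mod _ (hpow k)]
    change _ * (-ζ ^ (k : ℕ)) ^ (finRotate N x : ℕ) = _
    rw [hx, pow_succ, id]
    ring
  have hends : -endsColumn N = diagonal (fun k : Fin (N + 1) => -ζ ^ (k : ℕ)) * endsColumn N := by
    ext k x
    rw [diagonal_mul, Matrix.neg_apply, endsColumn_apply]
    split_ifs with h1 h2 <;> simp [*, hζ.pow_eq_one]
  rw [coxeterElement_map_ofReal, coxeterEigenbasis, fromCols_mul_fromBlocks, mul_fromCols,
    ← hshift, ← hends]
  simp

end coxeterEigenbasis

section principalRepresentation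

variable {N : ℕ}

/-- The phases `1, i, 1, i, …`: rescaling the weight vectors by them turns the real structure
`e_k ↦ (-1) ^ k * e_(N - k)` preserved by `symPow N` into `e_k ↦ e_(N - k)`. -/
def phase (k : ℕ) : ℂ := if Even k then 1 else Complex.I

theorem conj_phase (k : ℕ) : conj (phase k) = (-1) ^ k * phase k := by
  rcases Nat.even_or_odd k with hk | hk
  · simp [phase, hk]
  · simp [phase, hk.neg_one_pow, Nat.not_even_iff_odd.mpr hk]

theorem conj_phase_mul_phase (k : ℕ) : conj (phase k) * phase k = 1 := by
  rcases Nat.even_or_odd k with hk | hk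
  · simp [phase, hk]
  · simp [phase, Nat.not_even_iff_odd.mpr hk]

theorem phase_rev (hN : Even N) (k : Fin (N + 1)) : phase k.rev = phase k := by
  have hpar : Even (k.rev : ℕ) ↔ Even (k : ℕ) := by
    rw [Fin.val_rev, Nat.add_sub_add_right, Nat.even_sub k.is_le]
    tauto
  simp only [phase, hpar]

variable (N) in
/-- The basis of `ℂ^(N + 1)` in which `symPow N` becomes real and the image of a suitable torus
element of `SU(2)` becomes `coxeterElement N`. -/
noncomputable def realBasis (ζ : ℂ) : Matrix (Fin (N + 1)) (Fin N ⊕ Fin 1) ℂ :=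
  diagonal (fun k : Fin (N + 1) => phase k) * coxeterEigenbasis N ζ

variable [NeZero N] {ζ : ℂ} (hζ : IsPrimitiveRoot ζ N)
include hζ

theorem conjTranspose_realBasis_mul : (realBasis N ζ)ᴴ * realBasis N ζ = 1 := by
  have hphase : (diagonal fun k : Fin (N + 1) => phase k)ᴴ *
      (diagonal fun k : Fin (N + 1) => phase k) = 1 := by
    rw [diagonal_conjTranspose, diagonal_mul_diagonal, ← diagonal_one]
    exact congrArg diagonal (funext fun k => conj_phase_mul_phase k)
  rw [realBasis, conjTranspose_mul, Matrix.mul_assoc,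
    ← Matrix.mul_assoc _ _ (coxeterEigenbasis N ζ), hphase, Matrix.one_mul,
    conjTranspose_coxeterEigenbasis_mul hζ]

theorem realBasis_mul_conjTranspose : realBasis N ζ * (realBasis N ζ)ᴴ = 1 :=
  (mul_eq_one_comm_of_card_eq _ _ _ (by simp)).mp (conjTranspose_realBasis_mul hζ)

theorem realBasis_map_conj (hN : Even N) :
    (realBasis N ζ).map conj = symPow N SU2.quarterTurn * realBasis N ζ := by
  have hconj : (diagonal fun k : Fin (N + 1) => phase k).map conj =
      diagonal fun k : Fin (N + 1) => (-1) ^ (k : ℕ) * phase k := by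
    rw [diagonal_map (map_zero _)]
    exact congrArg diagonal (funext fun k => conj_phase k)
  rw [realBasis, Matrix.map_mul, hconj, coxeterEigenbasis_map_conj hζ, symPow_quarterTurn,
    Matrix.mul_assoc, Equiv.Perm.permMatrix, PEquiv.toMatrix_toPEquiv_mul,
    PEquiv.toMatrix_toPEquiv_mul]
  ext k x
  simp only [diagonal_mul, submatrix_apply, id, Fin.revPerm_apply, phase_rev hN, mul_assoc]

omit [NeZero N] in
theorem realBasis_mul_coxeterElement (hN : Even N) :
    realBasis N ζ *
        (coxeterElement N : Matrix (Fin N ⊕ Fin 1) (Fin N ⊕ Fin 1) ℝ).map Complex.ofReal =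
      diagonal (fun k : Fin (N + 1) => -ζ ^ (k : ℕ)) * realBasis N ζ := by
  rw [realBasis, Matrix.mul_assoc, coxeterEigenbasis_mul_coxeterElement hζ hN, ← Matrix.mul_assoc,
    ← Matrix.mul_assoc, (commute_diagonal _ _).eq]

omit hζ in
theorem symPow_torus_exp_pi_div :
    symPow N (SU2.torus (Circle.exp (Real.pi / N)) : Matrix (Fin 2) (Fin 2) ℂ) =
      diagonal fun k : Fin (N + 1) => -(conj (Circle.exp (Real.pi / N) : ℂ) ^ 2) ^ (k : ℕ) := by
  set z := Circle.exp (Real.pi / N) with hz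
  have hpow : (z : ℂ) ^ N = -1 := by
    rw [hz, ← Circle.coe_pow, ← Circle.exp_nsmul, nsmul_eq_mul, mul_div_cancel₀ _ (NeZero.ne _)]
    simp
  rw [SU2.coe_torus, symPow_diagonal]
  refine congrArg diagonal (funext fun k => ?_)
  change (z : ℂ) ^ (N - k : ℕ) * conj (z : ℂ) ^ (k : ℕ) = _
  rw [pow_sub₀ _ (Circle.coe_ne_zero z) k.is_le, hpow, ← Circle.coe_inv_eq_conj, Circle.coe_inv]
  ring

variable (N) in
omit hζ in
theorem isPrimitiveRoot_conj_exp_pi_div_sq :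
    IsPrimitiveRoot (conj (Circle.exp (Real.pi / N) : ℂ) ^ 2) N := by
  have hexp : conj (Circle.exp (Real.pi / N) : ℂ) ^ 2 =
      (Complex.exp (2 * Real.pi * Complex.I / N))⁻¹ := by
    rw [← Circle.coe_inv_eq_conj, Circle.coe_inv, inv_pow, Circle.coe_exp, ← Complex.exp_nat_mul]
    congr 2
    push_cast
    ring
  rw [hexp]
  exact (Complex.isPrimitiveRoot_exp N (NeZero.ne N)).inv

omit [NeZero N] hζ in
theorem exists_orthogonal_map_ofReal_eq_symPow_conj {I : Type*} [Fintype I] [DecidableEq I]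
    {V : Matrix (Fin (N + 1)) I ℂ} (hV : Vᴴ * V = 1) (hV' : V * Vᴴ = 1)
    (hconj : V.map conj = symPow N SU2.quarterTurn * V) :
    ∃ ρ : SU2 →* orthogonalGroup I ℝ,
      ∀ A, (ρ A : Matrix I I ℝ).map Complex.ofReal = Vᴴ * symPow N A * V := by
  have hmul : ∀ A B, Vᴴ * symPow N (A * B) * V = Vᴴ * symPow N A * V * (Vᴴ * symPow N B * V) := by
    intro A B
    simp only [map_mul, Matrix.mul_assoc]
    rw [← Matrix.mul_assoc V, hV', Matrix.one_mul]
  have hone : Vᴴ * symPow N 1 * V = 1 := by rw [map_one, Matrix.mul_one, hV]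
  let f : SU2 →* Matrix I I ℂ :=
    { toFun := fun A => Vᴴ * symPow N A * V
      map_one' := hone
      map_mul' := fun A B => hmul A B }
  refine exists_orthogonal_map_ofReal_eq f (fun A => ?_) (fun A => ?_)
  · have hconj' : Vᴴ.map conj = Vᴴ * symPow N (SU2.quarterTurn : Matrix (Fin 2) (Fin 2) ℂ)ᴴ := by
      rw [symPow_conjTranspose, ← conjTranspose_mul, ← hconj]
      rfl
    have hJ : (SU2.quarterTurn : Matrix (Fin 2) (Fin 2) ℂ)ᴴ * SU2.quarterTurn = 1 :=
      congrArg Subtype.val (inv_mul_cancel SU2.quarterTurn)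
    have hA : (SU2.quarterTurn : Matrix (Fin 2) (Fin 2) ℂ)ᴴ *
        (A : Matrix (Fin 2) (Fin 2) ℂ).map conj * SU2.quarterTurn = A := by
      rw [Matrix.mul_assoc, SU2.map_conj_mul_quarterTurn, ← Matrix.mul_assoc, hJ, Matrix.one_mul]
    change (Vᴴ * symPow N A * V).map conj = Vᴴ * symPow N A * V
    rw [Matrix.map_mul, Matrix.map_mul, ← symPow_map_conj, hconj, hconj', ← Matrix.mul_assoc,
      Matrix.mul_assoc Vᴴ, Matrix.mul_assoc Vᴴ, ← map_mul, ← map_mul, hA]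
  · have hA : (A : Matrix (Fin 2) (Fin 2) ℂ) * (A : Matrix (Fin 2) (Fin 2) ℂ)ᴴ = 1 :=
      congrArg Subtype.val (mul_inv_cancel A)
    change Vᴴ * symPow N A * V * (Vᴴ * symPow N A * V)ᴴ = 1
    rw [conjTranspose_mul, conjTranspose_mul, conjTranspose_conjTranspose, ← symPow_conjTranspose,
      ← Matrix.mul_assoc Vᴴ, ← hmul, hA, hone]

omit hζ in
theorem exists_monoidHom_torus_exp_pi_div_eq_coxeterElement (hN : Even N) :
    ∃ ρ : SU2 →* orthogonalGroup (Fin N ⊕ Fin 1) ℝ,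
      ρ (SU2.torus (Circle.exp (Real.pi / N))) = coxeterElement N := by
  have hζ := isPrimitiveRoot_conj_exp_pi_div_sq N
  obtain ⟨ρ, hρ⟩ := exists_orthogonal_map_ofReal_eq_symPow_conj (conjTranspose_realBasis_mul hζ)
    (realBasis_mul_conjTranspose hζ) (realBasis_map_conj hζ hN)
  refine ⟨ρ, Subtype.ext (Matrix.map_injective Complex.ofReal_injective ?_)⟩
  dsimp only
  rw [hρ, symPow_torus_exp_pi_div, Matrix.mul_assoc, ← realBasis_mul_coxeterElement hζ hN,
    ← Matrix.mul_assoc, conjTranspose_realBasis_mul hζ, Matrix.one_mul]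

end principalRepresentation

section planeRotation

/-- The rotation of `ℝ²` by the angle `θ`. -/
noncomputable def planeRotation (θ : ℝ) : orthogonalGroup (Fin 2) ℝ :=
  ⟨!![Real.cos θ, -Real.sin θ; Real.sin θ, Real.cos θ],
    (of_mem_specialOrthogonalGroup_fin_two_iff.mpr ⟨rfl, rfl, by simp⟩).1⟩

theorem coe_planeRotation (θ : ℝ) : (planeRotation θ : Matrix (Fin 2) (Fin 2) ℝ) =
    !![Real.cos θ, -Real.sin θ; Real.sin θ, Real.cos θ] := rfl

theorem planeRotation_add (θ φ : ℝ) :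
    planeRotation (θ + φ) = planeRotation θ * planeRotation φ := by
  refine Subtype.ext ?_
  rw [UnitaryGroup.mul_val, coe_planeRotation, coe_planeRotation, coe_planeRotation, mul_fin_two]
  simp only [Real.cos_add, Real.sin_add]
  ring_nf

theorem planeRotation_neg_apply_rev (θ : ℝ) (i j : Fin 2) :
    planeRotation (-θ) i.rev j.rev = planeRotation θ i j := by
  rw [coe_planeRotation, coe_planeRotation]
  fin_cases i <;> fin_cases j <;> simp

theorem det_planeRotation (θ : ℝ) : (planeRotation θ : Matrix (Fin 2) (Fin 2) ℝ).det = 1 := by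
  rw [coe_planeRotation, det_fin_two_of]
  linear_combination Real.cos_sq_add_sin_sq θ

theorem exists_planeRotation_eq {g : orthogonalGroup (Fin 2) ℝ}
    (hg : (g : Matrix (Fin 2) (Fin 2) ℝ).det = 1) : ∃ θ, planeRotation θ = g := by
  obtain ⟨hdiag, hanti, hnorm⟩ := mem_specialOrthogonalGroup_fin_two_iff.mp
    (show (g : Matrix (Fin 2) (Fin 2) ℝ) ∈ specialOrthogonalGroup (Fin 2) ℝ from ⟨g.2, hg⟩)
  set z : ℂ := ⟨g 0 0, g 1 0⟩
  have hz : ‖z‖ = 1 := by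
    rw [Complex.norm_def, Real.sqrt_eq_one, Complex.normSq_mk, ← hnorm, hanti]
    ring
  have hcos : Real.cos z.arg = g 0 0 := by
    rw [Complex.cos_arg (norm_ne_zero_iff.mp (hz ▸ one_ne_zero)), hz, div_one]
  have hsin : Real.sin z.arg = g 1 0 := by rw [Complex.sin_arg, hz, div_one]
  refine ⟨z.arg, Subtype.ext ?_⟩
  rw [coe_planeRotation, hcos, hsin, ← hanti, hdiag]
  ext i j
  fin_cases i <;> fin_cases j <;> simp [hdiag]

/-- The reflection of `ℝ²` in the second coordinate axis. -/
def axisReflection : orthogonalGroup (Fin 2) ℝ :=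
  orthogonalReindex (finSumFinEquiv (m := 1) (n := 1)) (orthogonalBlockDiag (-1, 1))

theorem coe_axisReflection :
    (axisReflection : Matrix (Fin 2) (Fin 2) ℝ) = !![-1, 0; 0, 1] := by
  ext i j
  fin_cases i <;> fin_cases j <;> rfl

theorem axisReflection_mul_planeRotation (θ : ℝ) :
    axisReflection * planeRotation θ = planeRotation (-θ) * axisReflection := by
  refine Subtype.ext ?_
  rw [UnitaryGroup.mul_val, UnitaryGroup.mul_val, coe_axisReflection, coe_planeRotation,
    coe_planeRotation, mul_fin_two, mul_fin_two]
  simp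

theorem exists_commutator_axisReflection_eq {g : orthogonalGroup (Fin 2) ℝ}
    (hg : (g : Matrix (Fin 2) (Fin 2) ℝ).det = 1) :
    ∃ s : orthogonalGroup (Fin 2) ℝ, ⁅s, axisReflection⁆ = g := by
  obtain ⟨θ, rfl⟩ := exists_planeRotation_eq hg
  refine ⟨planeRotation (θ / 2), ?_⟩
  rw [commutatorElement_def, mul_inv_eq_iff_eq_mul, mul_inv_eq_iff_eq_mul, mul_assoc,
    axisReflection_mul_planeRotation, ← mul_assoc, ← planeRotation_add]
  ring_nf

end planeRotation

section blockRotation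

variable {ι : Type*} [Fintype ι] [DecidableEq ι]

/-- The rotations by the angles `θ k` in pairwise orthogonal coordinate planes. -/
noncomputable def blockRotation (θ : ι → ℝ) : orthogonalGroup (Fin 2 × ι) ℝ :=
  ⟨blockDiagonal fun k => planeRotation (θ k), by
    rw [mem_orthogonalGroup_iff, blockDiagonal_transpose, ← blockDiagonal_mul, ← blockDiagonal_one]
    exact congrArg blockDiagonal
      (funext fun k => (mem_orthogonalGroup_iff _ ℝ).mp (planeRotation (θ k)).2)⟩

theorem coe_blockRotation (θ : ι → ℝ) :
    (blockRotation θ : Matrix (Fin 2 × ι) (Fin 2 × ι) ℝ) =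
      blockDiagonal fun k => (planeRotation (θ k) : Matrix (Fin 2) (Fin 2) ℝ) := rfl

theorem blockRotation_add (θ φ : ι → ℝ) :
    blockRotation (θ + φ) = blockRotation θ * blockRotation φ := by
  refine Subtype.ext ?_
  rw [UnitaryGroup.mul_val, coe_blockRotation, coe_blockRotation, coe_blockRotation,
    ← blockDiagonal_mul]
  exact congrArg blockDiagonal (funext fun k => congrArg Subtype.val (planeRotation_add _ _))

theorem det_blockRotation (θ : ι → ℝ) :
    (blockRotation θ : Matrix (Fin 2 × ι) (Fin 2 × ι) ℝ).det = 1 := by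
  simp [coe_blockRotation, det_blockDiagonal, det_planeRotation]

variable {m : ℕ}

variable (m) in
/-- The cyclic shift of `2 * (m + 1)` coordinates, arranged in the planes spanned by the coordinates
`k` and `k + m + 1`. -/
def planeShift : Equiv.Perm (Fin 2 × Fin (m + 1)) :=
  finProdFinEquiv.symm.permCongr (finRotate (2 * (m + 1)))

theorem planeShift_castSucc (i : Fin 2) (k : Fin m) :
    planeShift m (i, k.castSucc) = (i, k.succ) := by
  rw [planeShift, Equiv.permCongr_apply, Equiv.symm_symm, Equiv.symm_apply_eq]
  ext
  simp only [finRotate_apply, Fin.val_add, Fin.val_one', Nat.add_mod_mod, finProdFinEquiv_apply_val]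
  have hi : (m + 1) * (i : ℕ) ≤ (m + 1) * 1 := Nat.mul_le_mul_left _ (Fin.is_le i)
  rw [Fin.val_castSucc, Fin.val_succ, Nat.mod_eq_of_lt (by omega), add_right_comm]

theorem planeShift_last (i : Fin 2) : planeShift m (i, Fin.last m) = (i.rev, 0) := by
  rw [planeShift, Equiv.permCongr_apply, Equiv.symm_symm, Equiv.symm_apply_eq]
  ext
  simp only [finRotate_apply, Fin.val_add, Fin.val_one', Nat.add_mod_mod, finProdFinEquiv_apply_val]
  fin_cases i
  · simp [Nat.mod_eq_of_lt (show m + 1 < 2 * (m + 1) by omega)]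
  · simp [← two_mul, add_right_comm]

theorem orthogonalPerm_planeShift_mul_blockRotation (β : Fin (m + 1) → ℝ) :
    orthogonalPerm (planeShift m) * blockRotation β =
      blockRotation (Fin.cons (-β (Fin.last m)) (Fin.init β)) * orthogonalPerm (planeShift m) := by
  refine Subtype.ext ?_
  rw [UnitaryGroup.mul_val, UnitaryGroup.mul_val, coe_orthogonalPerm, Equiv.Perm.permMatrix,
    PEquiv.toMatrix_toPEquiv_mul, PEquiv.mul_toMatrix_toPEquiv]
  ext x y
  obtain ⟨⟨i, k⟩, rfl⟩ := (planeShift m).surjective x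
  obtain ⟨j, l⟩ := y
  change blockRotation β ((planeShift m).symm (planeShift m (i, k))) (j, l) =
    blockRotation _ (planeShift m (i, k)) (planeShift m (j, l))
  rw [Equiv.symm_apply_apply, coe_blockRotation, coe_blockRotation]
  induction k using Fin.lastCases <;> induction l using Fin.lastCases <;>
    simp [planeShift_castSucc, planeShift_last, blockDiagonal_apply, Fin.init, Fin.succ_ne_zero,
      (Fin.succ_ne_zero _).symm, Fin.castSucc_ne_last, (Fin.castSucc_ne_last _).symm,
      planeRotation_neg_apply_rev]

theorem exists_sub_cons_neg_last_init_eq (θ : Fin (m + 1) → ℝ) :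
    ∃ β : Fin (m + 1) → ℝ, θ + Fin.cons (-β (Fin.last m)) (Fin.init β) = β := by
  have hzero : Fin.partialSum θ 1 = θ 0 := by simpa using Fin.partialSum_succ θ 0
  refine ⟨fun k => Fin.partialSum θ k.succ - Fin.partialSum θ (Fin.last (m + 1)) / 2, ?_⟩
  ext k
  induction k using Fin.cases with
  | zero =>
    simp only [Pi.add_apply, Fin.cons_zero, Fin.succ_zero_eq_one, Fin.succ_last, hzero]
    ring
  | succ k =>
    simp only [Pi.add_apply, Fin.cons_succ, Fin.init, ← Fin.succ_castSucc, Fin.partialSum_succ]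
    ring

theorem exists_commutator_planeShift_eq_blockRotation (θ : Fin (m + 1) → ℝ) :
    ∃ s : orthogonalGroup (Fin 2 × Fin (m + 1)) ℝ,
      ⁅s, orthogonalPerm (planeShift m)⁆ = blockRotation θ := by
  obtain ⟨β, hβ⟩ := exists_sub_cons_neg_last_init_eq θ
  refine ⟨blockRotation β, ?_⟩
  rw [commutatorElement_def, mul_inv_eq_iff_eq_mul, mul_inv_eq_iff_eq_mul, mul_assoc,
    orthogonalPerm_planeShift_mul_blockRotation, ← mul_assoc, ← blockRotation_add, hβ]

end blockRotation

section invariantPlane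

variable {E : Type*} [NormedAddCommGroup E] [InnerProductSpace ℝ E] (g : E ≃ₗᵢ[ℝ] E)

theorem exists_orthonormal_map_eq_planeRotation_of_ne {v : E} (hv : ‖v‖ = 1) {c : ℝ}
    (hc : g v + g.symm v = (2 * c) • v) (hne : g v ≠ c • v) :
    ∃ θ, ∃ b : Fin 2 → E, Orthonormal ℝ b ∧ ∀ j, g (b j) = ∑ i, planeRotation θ i j • b i := by
  have hvv : inner ℝ v v = (1 : ℝ) := by rw [real_inner_self_eq_norm_sq, hv, one_pow]
  have hvg : inner ℝ v (g v) = c := by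
    have h := congrArg (inner ℝ v) hc
    rw [inner_add_right, ← g.inner_map_eq_flip, inner_smul_right, hvv] at h
    linarith [real_inner_comm v (g v)]
  set u := g v - c • v with hu
  have hvu : inner ℝ v u = (0 : ℝ) := by
    rw [hu, inner_sub_right, inner_smul_right, hvg, hvv]; ring
  have hunorm : ‖u‖ ^ 2 = 1 - c ^ 2 := by
    rw [hu, norm_sub_sq_real, g.norm_map, norm_smul, inner_smul_right, real_inner_comm, hvg, hv,
      Real.norm_eq_abs, mul_one, sq_abs]
    ring
  have hgv : g v = c • v + u := by rw [hu, add_sub_cancel]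
  have hu0 : ‖u‖ ≠ 0 := norm_ne_zero_iff.mpr (sub_ne_zero.mpr hne)
  have hcos : Real.cos (Real.arccos c) = c := Real.cos_arccos
    (by nlinarith [sq_nonneg ‖u‖]) (by nlinarith [sq_nonneg ‖u‖])
  have hsin : Real.sin (Real.arccos c) = ‖u‖ := by
    rw [Real.sin_arccos, ← hunorm, Real.sqrt_sq (norm_nonneg u)]
  have hgu : g u = c • u - ‖u‖ ^ 2 • v := by
    have hgg : g (g v) = (2 * c) • g v - v := by
      rw [← map_smul, ← hc, map_add, g.apply_symm_apply, add_sub_cancel_right]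
    rw [hunorm, hu, map_sub, map_smul, hgg]
    module
  refine ⟨Real.arccos c, ![v, ‖u‖⁻¹ • u], ?_, fun j => ?_⟩
  · rw [orthonormal_vecCons_iff]
    simp [hv, hvu, inner_smul_right, norm_smul, hu0]
  · rw [coe_planeRotation, hcos, hsin]
    fin_cases j
    · simp [hgv, smul_smul, hu0]
    · simp [hgu, smul_sub, smul_smul, mul_comm c, inv_mul_eq_div, sq, hu0]
      abel

theorem exists_orthonormal_map_eq_planeRotation_of_eq {v w : E}
    (hvw : Orthonormal ℝ ![v, w]) {c : ℝ} (hv : g v = c • v) (hw : g w = c • w) :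
    ∃ θ, ∃ b : Fin 2 → E, Orthonormal ℝ b ∧ ∀ j, g (b j) = ∑ i, planeRotation θ i j • b i := by
  have hc : |c| = 1 := by
    have h := congrArg norm hv
    have hv1 : ‖v‖ = 1 := hvw.1 0
    rwa [g.norm_map, norm_smul, hv1, mul_one, Real.norm_eq_abs, eq_comm] at h
  have hcos : Real.cos (Real.arccos c) = c := Real.cos_arccos
    (neg_le_of_abs_le hc.le) (le_of_abs_le hc.le)
  have hsin : Real.sin (Real.arccos c) = 0 := by
    rw [Real.sin_arccos, ← sq_abs, hc, one_pow, sub_self, Real.sqrt_zero]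
  refine ⟨Real.arccos c, ![v, w], hvw, fun j => ?_⟩
  rw [coe_planeRotation, hcos, hsin]
  fin_cases j <;> simp [hv, hw]

theorem exists_orthonormal_map_eq_planeRotation (hE : 2 < Module.finrank ℝ E) :
    ∃ θ, ∃ b : Fin 2 → E, Orthonormal ℝ b ∧ ∀ j, g (b j) = ∑ i, planeRotation θ i j • b i := by
  have : FiniteDimensional ℝ E := Module.finite_of_finrank_pos (by omega)
  have hsymm : ((g : E →ₗ[ℝ] E) + (g.symm : E →ₗ[ℝ] E)).IsSymmetric := fun x y => by
    change inner ℝ (g x + g.symm x) y = inner ℝ x (g y + g.symm y)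
    rw [inner_add_left, inner_add_right, g.inner_map_eq_flip, g.symm.inner_map_eq_flip,
      g.symm_symm, add_comm]
  let b := hsymm.eigenvectorBasis rfl
  let c i := hsymm.eigenvalues rfl i / 2
  have hb : ∀ i, g (b i) + g.symm (b i) = (2 * c i) • b i := fun i => by
    rw [mul_div_cancel₀ _ two_ne_zero]
    exact hsymm.apply_eigenvectorBasis rfl i
  by_cases hne : ∃ i, g (b i) ≠ c i • b i
  · obtain ⟨i, hi⟩ := hne
    exact exists_orthonormal_map_eq_planeRotation_of_ne g (b.orthonormal.1 i) (hb i) hi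
  push Not at hne
  have hc : ∀ i, c i ∈ ({1, -1} : Finset ℝ) := fun i => by
    have h := congrArg norm (hne i)
    rw [g.norm_map, norm_smul, b.orthonormal.1 i, mul_one, eq_comm, Real.norm_eq_abs] at h
    simpa using eq_or_eq_neg_of_abs_eq h
  obtain ⟨i, -, j, -, hij, hcij⟩ := Finset.exists_ne_map_eq_of_card_lt_of_maps_to
    (s := Finset.univ) (Finset.card_le_two.trans_lt (by simpa using hE)) fun i _ => hc i
  refine exists_orthonormal_map_eq_planeRotation_of_eq g (w := b j) ?_ (hne i) ?_
  · simp [orthonormal_vecCons_iff, b.inner_eq_zero hij]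
  · rw [hne j, ← hcij]

end invariantPlane

section normalForm

variable {I K : Type*} [Fintype I] [DecidableEq I] [Fintype K] [DecidableEq K]

theorem exists_orthogonalBlockDiag_eq {M : orthogonalGroup (I ⊕ K) ℝ} {A : orthogonalGroup I ℝ}
    (hA : (M : Matrix (I ⊕ K) (I ⊕ K) ℝ).toBlocks₁₁ = A)
    (h0 : (M : Matrix (I ⊕ K) (I ⊕ K) ℝ).toBlocks₂₁ = 0) :
    ∃ D, M = orthogonalBlockDiag (A, D) := by
  obtain ⟨M, hM⟩ := M
  obtain ⟨A', B, C, D, rfl⟩ : ∃ A' B C D, M = fromBlocks A' B C D :=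
    ⟨_, _, _, _, (fromBlocks_toBlocks M).symm⟩
  obtain rfl : A' = A := by simpa using hA
  obtain rfl : C = 0 := by simpa using h0
  have hMM := (mem_orthogonalGroup_iff _ ℝ).mp hM
  simp only [fromBlocks_transpose, fromBlocks_multiply, ← fromBlocks_one, fromBlocks_inj,
    (mem_orthogonalGroup_iff I ℝ).mp A.2, add_eq_left, transpose_zero, Matrix.zero_mul,
    zero_add] at hMM
  obtain ⟨hB, -, -, hD⟩ := hMM
  obtain rfl : B = 0 := self_mul_conjTranspose_eq_zero.mp hB
  exact ⟨⟨D, (mem_orthogonalGroup_iff _ ℝ).mpr hD⟩, rfl⟩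

/-- The isometry of Euclidean space given by an orthogonal matrix. -/
noncomputable def euclideanIsometry (g : orthogonalGroup I ℝ) :
    EuclideanSpace ℝ I ≃ₗᵢ[ℝ] EuclideanSpace ℝ I :=
  Unitary.linearIsometryEquiv ⟨toEuclideanCLM (𝕜 := ℝ) g.1, Unitary.map_mem _ g.2⟩

theorem ofLp_euclideanIsometry (g : orthogonalGroup I ℝ) (v : EuclideanSpace ℝ I) :
    (euclideanIsometry g v).ofLp = (g : Matrix I I ℝ) *ᵥ v.ofLp := rfl

theorem exists_isConj_apply_eq_inner (g : orthogonalGroup I ℝ)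
    (b : OrthonormalBasis I ℝ (EuclideanSpace ℝ I)) :
    ∃ h : orthogonalGroup I ℝ, IsConj g h ∧
      ∀ i j, h i j = inner ℝ (b i) (euclideanIsometry g (b j)) := by
  let P : orthogonalGroup I ℝ := ⟨_,
    (EuclideanSpace.basisFun I ℝ).toMatrix_orthonormalBasis_mem_orthogonal b⟩
  refine ⟨P⁻¹ * g * P, isConj_iff.mpr ⟨P⁻¹, by rw [inv_inv]⟩, fun i j => ?_⟩
  rw [EuclideanSpace.inner_eq_star_dotProduct, ofLp_euclideanIsometry, star_trivial,
    dotProduct_comm]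
  change ((P : Matrix I I ℝ)ᵀ * g * P) i j = _
  rw [Matrix.mul_assoc, Matrix.mul_apply]
  rfl

theorem exists_isConj_orthogonalBlockDiag_planeRotation [Nonempty K]
    (g : orthogonalGroup (Fin 2 ⊕ K) ℝ) :
    ∃ θ g', IsConj g (orthogonalBlockDiag (planeRotation θ, g')) := by
  obtain ⟨θ, v, hv, hgv⟩ := exists_orthonormal_map_eq_planeRotation (euclideanIsometry g)
    (by simpa using Fintype.card_pos)
  obtain ⟨b, hb⟩ := Orthonormal.exists_orthonormalBasis_extension_of_card_eq
    (finrank_euclideanSpace (𝕜 := ℝ) (ι := Fin 2 ⊕ K)) (v := Sum.elim v 0)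
    (s := Set.range Sum.inl) ⟨by rintro ⟨_, j, rfl⟩; exact hv.1 j, by
      rintro ⟨_, i, rfl⟩ ⟨_, j, rfl⟩ hij
      exact hv.2 fun h => hij (by rw [h])⟩
  have hbv : ∀ j, b (Sum.inl j) = v j := fun j => hb _ ⟨j, rfl⟩
  obtain ⟨h, hgh, happly⟩ := exists_isConj_apply_eq_inner g b
  have hcol : ∀ i j, h i (Sum.inl j) = ∑ k, planeRotation θ k j * if i = Sum.inl k then 1 else 0 :=
    fun i j => by
      simp only [happly, hbv, hgv, inner_sum, inner_smul_right]
      simp only [← hbv, b.inner_eq_ite]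
  obtain ⟨g', rfl⟩ : ∃ g', h = orthogonalBlockDiag (planeRotation θ, g') := by
    refine exists_orthogonalBlockDiag_eq ?_ ?_
    · ext i j
      simp [toBlocks₁₁, hcol]
    · ext i j
      simp [toBlocks₂₁, hcol]
  exact ⟨θ, g', hgh⟩

variable {m : ℕ}

variable (m K) in
/-- Splitting off the first of `m + 1` coordinate planes. -/
def firstPlaneEquiv : Fin 2 ⊕ ((Fin 2 × Fin m) ⊕ K) ≃ (Fin 2 × Fin (m + 1)) ⊕ K where
  toFun
    | Sum.inl i => Sum.inl (i, 0)
    | Sum.inr (Sum.inl (i, k)) => Sum.inl (i, k.succ)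
    | Sum.inr (Sum.inr x) => Sum.inr x
  invFun
    | Sum.inl (i, k) => Fin.cases (Sum.inl i) (fun k => Sum.inr (Sum.inl (i, k))) k
    | Sum.inr x => Sum.inr (Sum.inr x)
  left_inv := by rintro (i | ⟨i, k⟩ | x) <;> rfl
  right_inv := by
    rintro (⟨i, k⟩ | x)
    · induction k using Fin.cases <;> rfl
    · rfl

theorem orthogonalReindex_firstPlaneEquiv (θ : ℝ) (φ : Fin m → ℝ) (g : orthogonalGroup K ℝ) :
    orthogonalReindex (firstPlaneEquiv K m)
        (orthogonalBlockDiag (planeRotation θ, orthogonalBlockDiag (blockRotation φ, g))) =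
      orthogonalBlockDiag (blockRotation (Fin.cons θ φ), g) := by
  rw [← MulEquiv.eq_symm_apply]
  ext x y
  change _ = orthogonalBlockDiag (blockRotation (Fin.cons θ φ), g)
    (firstPlaneEquiv K m x) (firstPlaneEquiv K m y)
  simp only [coe_orthogonalBlockDiag, coe_blockRotation]
  rcases x with i | ⟨i, k⟩ | x <;> rcases y with j | ⟨j, l⟩ | y <;>
    simp [firstPlaneEquiv, blockDiagonal_apply, Fin.succ_ne_zero, (Fin.succ_ne_zero _).symm]

theorem exists_isConj_orthogonalBlockDiag_blockRotation [Nonempty K]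
    (g : orthogonalGroup ((Fin 2 × Fin m) ⊕ K) ℝ) :
    ∃ θ g', IsConj g (orthogonalBlockDiag (blockRotation θ, g')) := by
  induction m with
  | zero =>
    obtain ⟨g', rfl⟩ : ∃ g', g = orthogonalBlockDiag (blockRotation 0, g') :=
      exists_orthogonalBlockDiag_eq (Subsingleton.elim _ _) (Subsingleton.elim _ _)
    exact ⟨0, g', IsConj.refl _⟩
  | succ m ih =>
    let e := orthogonalReindex (firstPlaneEquiv K m)
    obtain ⟨θ, g₁, hg⟩ := exists_isConj_orthogonalBlockDiag_planeRotation (e.symm g)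
    obtain ⟨φ, g', hg₁⟩ := ih g₁
    obtain ⟨s, hs⟩ := isConj_iff.mp hg₁
    have hsum : IsConj (orthogonalBlockDiag (planeRotation θ, g₁))
        (orthogonalBlockDiag (planeRotation θ, orthogonalBlockDiag (blockRotation φ, g'))) :=
      orthogonalBlockDiag.map_isConj (isConj_iff.mpr ⟨(1, s), by simp [hs]⟩)
    refine ⟨Fin.cons θ φ, g', ?_⟩
    simpa [e, orthogonalReindex_firstPlaneEquiv] using e.toMonoidHom.map_isConj (hg.trans hsum)

end normalForm

section commutators

variable {K : Type*} [Fintype K] [DecidableEq K] {m : ℕ}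

theorem exists_isConj_commutator_orthogonalBlockDiag [Nonempty K] {c : orthogonalGroup K ℝ}
    (hc : ∀ g : orthogonalGroup K ℝ, (g : Matrix K K ℝ).det = 1 →
      ∃ s : orthogonalGroup K ℝ, ⁅s, c⁆ = g)
    {g : orthogonalGroup ((Fin 2 × Fin (m + 1)) ⊕ K) ℝ} (hg : det g.1 = 1) :
    ∃ s : orthogonalGroup ((Fin 2 × Fin (m + 1)) ⊕ K) ℝ,
      IsConj ⁅s, orthogonalBlockDiag (orthogonalPerm (planeShift m), c)⁆ g := by
  obtain ⟨θ, g', hconj⟩ := exists_isConj_orthogonalBlockDiag_blockRotation g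
  rw [← det_eq_of_isConj hconj, det_orthogonalBlockDiag, det_blockRotation, one_mul] at hg
  obtain ⟨t, ht⟩ := exists_commutator_planeShift_eq_blockRotation θ
  obtain ⟨s, hs⟩ := hc g' hg
  refine ⟨orthogonalBlockDiag (t, s), ?_⟩
  have hts : ⁅(t, s), (orthogonalPerm (planeShift m), c)⁆ = (blockRotation θ, g') :=
    Prod.ext ht hs
  rw [← map_commutatorElement, hts]
  exact hconj.symm

theorem exists_monoidHom_forall_mem_SO_isConj_commutator_of_card_eq {G : Type*} [Group G]
    [Nonempty K] {c : orthogonalGroup K ℝ}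
    (hc : ∀ g : orthogonalGroup K ℝ, (g : Matrix K K ℝ).det = 1 →
      ∃ s : orthogonalGroup K ℝ, ⁅s, c⁆ = g)
    {ρ : G →* orthogonalGroup ((Fin 2 × Fin (m + 1)) ⊕ K) ℝ} {d : G}
    (hρ : ρ d = orthogonalBlockDiag (orthogonalPerm (planeShift m), c)) {n : ℕ}
    (hn : Fintype.card ((Fin 2 × Fin (m + 1)) ⊕ K) = n) :
    ∃ σ : G →* orthogonalGroup (Fin n) ℝ,
      ∀ x ∈ SO n, ∃ s : orthogonalGroup (Fin n) ℝ, IsConj ⁅s, σ d⁆ x := by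
  let e := orthogonalReindex (Fintype.equivFinOfCardEq hn)
  refine ⟨e.toMonoidHom.comp ρ, fun x hx => ?_⟩
  obtain ⟨g, rfl⟩ := e.surjective x
  have hg : det g.1 = 1 := (det_orthogonalReindex _ g).symm.trans hx
  obtain ⟨s, hs⟩ := exists_isConj_commutator_orthogonalBlockDiag hc hg
  refine ⟨e s, ?_⟩
  rw [MonoidHom.comp_apply, hρ]
  exact map_commutatorElement e _ _ ▸ e.toMonoidHom.map_isConj hs

theorem exists_monoidHom_torus_exp_pi_div_eq_planeShift (m : ℕ) :
    ∃ ρ : SU2 →* orthogonalGroup ((Fin 2 × Fin (m + 1)) ⊕ Fin 1) ℝ,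
      ρ (SU2.torus (Circle.exp (Real.pi / (2 * (m + 1) : ℕ)))) =
        orthogonalBlockDiag (orthogonalPerm (planeShift m), -1) := by
  obtain ⟨ρ, hρ⟩ := exists_monoidHom_torus_exp_pi_div_eq_coxeterElement (even_two_mul (m + 1))
  refine ⟨(orthogonalReindex (finProdFinEquiv.symm.sumCongr (Equiv.refl _))).toMonoidHom.comp ρ, ?_⟩
  rw [MonoidHom.comp_apply, hρ, planeShift, ← orthogonalReindex_orthogonalPerm]
  exact orthogonalReindex_sumCongr _ _ _ _

theorem exists_commutator_neg_one_eq {g : orthogonalGroup (Fin 1) ℝ}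
    (hg : (g : Matrix (Fin 1) (Fin 1) ℝ).det = 1) :
    ∃ s : orthogonalGroup (Fin 1) ℝ, ⁅s, -1⁆ = g := by
  refine ⟨1, (commutatorElement_one_left _).trans (Subtype.ext ?_)⟩
  ext i j
  rw [Subsingleton.elim i 0, Subsingleton.elim j 0, ← det_fin_one g.1, hg]
  rfl

theorem exists_monoidHom_forall_mem_SO_isConj_commutator {n m : ℕ}
    (hn : n = 2 * (m + 1) + 1 ∨ n = 2 * (m + 1) + 2) :
    ∃ σ : SU2 →* orthogonalGroup (Fin n) ℝ, ∀ x ∈ SO n, ∃ s : orthogonalGroup (Fin n) ℝ,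
      IsConj ⁅s, σ (SU2.torus (Circle.exp (Real.pi / (2 * (m + 1) : ℕ))))⁆ x := by
  obtain ⟨ρ, hρ⟩ := exists_monoidHom_torus_exp_pi_div_eq_planeShift m
  rcases hn with rfl | rfl
  · exact exists_monoidHom_forall_mem_SO_isConj_commutator_of_card_eq
      (fun _ => exists_commutator_neg_one_eq) hρ (by simp)
  · let e := (orthogonalReindex (Equiv.sumAssoc (Fin 2 × Fin (m + 1)) (Fin 1) (Fin 1))).trans
      (orthogonalReindex ((Equiv.refl _).sumCongr finSumFinEquiv))
    let ρ' := e.toMonoidHom.comp (orthogonalBlockDiag.comp (ρ.prod 1))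
    refine exists_monoidHom_forall_mem_SO_isConj_commutator_of_card_eq (ρ := ρ')
      (c := axisReflection) (fun _ => exists_commutator_axisReflection_eq) ?_ (by simp)
    change e (orthogonalBlockDiag (ρ _, 1)) = _
    rw [hρ, MulEquiv.trans_apply, orthogonalReindex_sumAssoc, orthogonalReindex_sumCongr]
    rfl

end commutators

/-- For all nontrivial words `w₁, w₂`, there is `N` such that for all `n ≥ N`,
`SO(n) = w₁(SO(n)) · w₂(SO(n))`. -/
theorem so_waring_two {d₁ d₂ : ℕ} (w₁ : FreeGroup (Fin d₁)) (w₂ : FreeGroup (Fin d₂))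
    (hw₁ : w₁ ≠ 1) (hw₂ : w₂ ≠ 1) :
    ∃ N : ℕ, ∀ n : ℕ, N ≤ n → ∀ x ∈ SO n,
      ∃ g₁ ∈ wordValuesIn w₁ (SO n), ∃ g₂ ∈ wordValuesIn w₂ (SO n), x = g₁ * g₂ := by
  obtain ⟨c₁, hc₁, hw₁⟩ := SU2.exists_lt_two_forall_le_re_trace_mem_wordValuesIn hw₁
  obtain ⟨c₂, hc₂, hw₂⟩ := SU2.exists_lt_two_forall_le_re_trace_mem_wordValuesIn hw₂
  obtain ⟨M, hM⟩ := Filter.eventually_atTop.mp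
    ((SU2.tendsto_re_trace_torus_exp_pi_div.eventually_const_le hc₁).and
      (SU2.tendsto_re_trace_torus_exp_pi_div.eventually_const_le hc₂))
  refine ⟨2 * (M + 1) + 1, fun n hn x hx => ?_⟩
  obtain ⟨m, hMm, hnm⟩ : ∃ m, M ≤ m ∧ (n = 2 * (m + 1) + 1 ∨ n = 2 * (m + 1) + 2) :=
    ⟨(n - 1) / 2 - 1, by omega, by omega⟩
  obtain ⟨htrace₁, htrace₂⟩ := hM (2 * (m + 1)) (by omega)
  obtain ⟨σ, hσ⟩ := exists_monoidHom_forall_mem_SO_isConj_commutator hnm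
  obtain ⟨s, hs⟩ := hσ x hx
  have hmaps : Set.MapsTo σ Set.univ (SO n) := fun A _ =>
    det_eq_one_of_forall_exists_sq SU2.exists_sq_eq σ A
  refine wordValuesIn.exists_mul_eq_of_isConj_commutator mapsTo_conj_SO
    (wordValuesIn.map_mem hmaps (hw₁ _ htrace₁)) ?_ hs
  rw [← map_inv]
  exact wordValuesIn.map_mem hmaps (hw₂ _ (by rwa [SU2.re_trace_inv]))
end

section
/- Let A and B be two elements of the compact symplectic group Sp(n). If A and B have the same characteristic polynomial (as 2n×2n complex matrices), then A and B are conjugate in Sp(n), i.e., there exists U ∈ Sp(n) with UAU⁻¹ = B. -/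
open scoped Matrix

/-- The standard symplectic form `J = [[0, I_n], [-I_n, 0]]`. -/
def sympJ (n : ℕ) : Matrix (Fin n ⊕ Fin n) (Fin n ⊕ Fin n) ℂ :=
  Matrix.fromBlocks 0 1 (-1) 0

/-- The compact symplectic group `Sp(n) = U(2n) ∩ Sp(2n, ℂ)`, as the subset of the
unitary group of `2n × 2n` complex matrices `M` satisfying `Mᵀ J M = J`. -/
def CompactSp (n : ℕ) : Set (Matrix.unitaryGroup (Fin n ⊕ Fin n) ℂ) :=
  {M | (M : Matrix (Fin n ⊕ Fin n) (Fin n ⊕ Fin n) ℂ)ᵀ * sympJ n *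
        (M : Matrix (Fin n ⊕ Fin n) (Fin n ⊕ Fin n) ℂ) = sympJ n}

/-!
Normal matrices with the same characteristic polynomial have the same eigenvalues with
multiplicity, so by the spectral theorem `B = V A V⁻¹` with `V` unitary. Both `J` and `K = Vᵀ J V`
are preserved by `A`, hence `A` commutes with the unitary matrix `W = K⁻¹ J`. Diagonalizing `W`
gives a unitary square root `C = p(W)` that is a polynomial in `W`. So `C` commutes with `A`, and
it is self-adjoint for the form `K` because `W` is, which gives `Cᵀ K C = K C² = J`. Therefore
`U = V C` preserves `J` and still conjugates `A` to `B`.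
-/

section

open Matrix Unitary Module Polynomial

variable {m 𝕜 : Type*} [Fintype m] [DecidableEq m] [RCLike 𝕜]

theorem conjStarAlgAut_apply_eq_iff {S R : Type*} [Semiring R] [StarMul R] [CommSemiring S]
    [Algebra S R] {u : unitary R} {x y : R} :
    conjStarAlgAut S R u x = y ↔ u * x = y * u := by
  rw [conjStarAlgAut_apply]
  constructor <;> intro h
  · rw [← h, mul_assoc, Unitary.coe_star_mul_self, mul_one]
  · rw [h, mul_assoc, Unitary.mul_star_self_of_mem u.2, mul_one]

theorem exists_orthonormalBasis_apply_eq_smul_of_commute {ι E : Type*} [Fintype ι]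
    [NormedAddCommGroup E] [InnerProductSpace 𝕜 E] [FiniteDimensional 𝕜 E] {S T : E →ₗ[𝕜] E}
    (hS : S.IsSymmetric) (hT : T.IsSymmetric) (hST : Commute S T)
    (hι : finrank 𝕜 E = Fintype.card ι) :
    ∃ (b : OrthonormalBasis ι 𝕜 E) (μ ν : ι → 𝕜),
      ∀ i, S (b i) = μ i • b i ∧ T (b i) = ν i • b i := by
  classical
  let V : 𝕜 × 𝕜 → Submodule 𝕜 E := fun c ↦ End.eigenspace S c.2 ⊓ End.eigenspace T c.1
  have hV : DirectSum.IsInternal V := hS.directSum_isInternal_of_commute hT hST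
  let : Fintype {c // V c ≠ ⊥} :=
    (WellFoundedGT.finite_ne_bot_of_iSupIndep hV.submodule_iSupIndep).fintype
  have hV' : DirectSum.IsInternal fun c : {c // V c ≠ ⊥} ↦ V c :=
    DirectSum.isInternal_ne_bot_iff.mpr hV
  have hVo : OrthogonalFamily 𝕜 (fun c : {c // V c ≠ ⊥} ↦ V c) fun c ↦ (V c).subtypeₗᵢ :=
    (LinearMap.IsSymmetric.orthogonalFamily_eigenspace_inf_eigenspace hS hT).comp
      Subtype.val_injective
  let e := Fintype.equivFin ι
  let c (i : ι) : {c // V c ≠ ⊥} := hV'.subordinateOrthonormalBasisIndex hι (e i) hVo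
  refine ⟨(hV'.subordinateOrthonormalBasis hι hVo).reindex e.symm, fun i ↦ (c i).1.2,
    fun i ↦ (c i).1.1, fun i ↦ ?_⟩
  have hmem := hV'.subordinateOrthonormalBasis_subordinate hι (e i) hVo
  simpa only [OrthonormalBasis.reindex_apply, Equiv.symm_symm, ← End.mem_eigenspace_iff]
    using! hmem

theorem exists_eq_conjStarAlgAut_diagonal_of_commute {H K : Matrix m m 𝕜} (hH : H.IsHermitian)
    (hK : K.IsHermitian) (hHK : Commute H K) :
    ∃ (Q : unitaryGroup m 𝕜) (d e : m → 𝕜), H = conjStarAlgAut 𝕜 _ Q (diagonal d) ∧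
      K = conjStarAlgAut 𝕜 _ Q (diagonal e) := by
  have hcomm : Commute (toLpLin 2 2 H) (toLpLin 2 2 K) := hHK.map (toLpLinAlgEquiv 2)
  obtain ⟨b, d, e, hb⟩ := exists_orthonormalBasis_apply_eq_smul_of_commute
    (isSymmetric_toEuclideanLin_iff.mpr hH) (isSymmetric_toEuclideanLin_iff.mpr hK) hcomm
    finrank_euclideanSpace
  let Q : unitaryGroup m 𝕜 := ⟨(EuclideanSpace.basisFun m 𝕜).toBasis.toMatrix b.toBasis,
    (EuclideanSpace.basisFun m 𝕜).toMatrix_orthonormalBasis_mem_unitary b⟩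
  have hQ {A : Matrix m m 𝕜} {f : m → 𝕜} (hf : ∀ j, toEuclideanLin A (b j) = f j • b j) :
      A = conjStarAlgAut 𝕜 _ Q (diagonal f) := by
    refine (conjStarAlgAut_apply_eq_iff.mpr <| Matrix.ext fun i j ↦ ?_).symm
    rw [mul_diagonal, mul_comm]
    exact congr($(hf j) i).symm
  exact ⟨Q, d, e, hQ fun j ↦ (hb j).1, hQ fun j ↦ (hb j).2⟩

theorem exists_eq_conjStarAlgAut_diagonal (A : Matrix m m ℂ) [IsStarNormal A] :
    ∃ (Q : unitaryGroup m ℂ) (d : m → ℂ), A = conjStarAlgAut ℂ _ Q (diagonal d) := by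
  obtain ⟨Q, d, e, hd, he⟩ := exists_eq_conjStarAlgAut_diagonal_of_commute
    (realPart A).2 (imaginaryPart A).2
    (isStarNormal_iff_commute_realPart_imaginaryPart.mp inferInstance)
  refine ⟨Q, d + Complex.I • e, ?_⟩
  rw [← realPart_add_I_smul_imaginaryPart A, hd, he, ← map_smul, ← map_add, ← diagonal_smul,
    diagonal_add]
  rfl

theorem exists_perm_comp_eq_of_map_univ_eq {ι α : Type*} [Fintype ι] {d e : ι → α}
    (h : Finset.univ.val.map d = Finset.univ.val.map e) : ∃ σ : Equiv.Perm ι, e ∘ σ = d := by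
  classical
  have hcard (c : α) : Fintype.card {i // d i = c} = Fintype.card {i // e i = c} := by
    simpa [Multiset.count_map, Fintype.card_subtype, Finset.card, Finset.filter, eq_comm]
      using congr(Multiset.count c $h)
  exact ⟨Equiv.ofFiberEquiv fun c ↦ Fintype.equivOfCardEq (hcard c),
    funext (Equiv.ofFiberEquiv_map _)⟩

theorem roots_charpoly_diagonal {R : Type*} [CommRing R] [IsDomain R] (d : m → R) :
    (diagonal d).charpoly.roots = Finset.univ.val.map d := by
  rw [charpoly_diagonal, roots_prod _ _ (Finset.prod_ne_zero_iff.mpr fun i _ ↦ X_sub_C_ne_zero _)]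
  simp

theorem charpoly_conjStarAlgAut {R : Type*} [CommRing R] [StarRing R] (U : unitaryGroup m R)
    (A : Matrix m m R) :
    (conjStarAlgAut R _ U A).charpoly = A.charpoly := by
  rw [conjStarAlgAut_apply, charpoly_mul_comm, ← mul_assoc, Unitary.coe_star_mul_self, one_mul]

theorem permMatrix_mem_unitaryGroup {R : Type*} [CommRing R] [StarRing R] (σ : Equiv.Perm m) :
    σ.permMatrix R ∈ unitaryGroup m R := by
  rw [mem_unitaryGroup_iff, star_eq_conjTranspose, conjTranspose_permMatrix, ← permMatrix_mul,
    inv_mul_cancel, permMatrix_one]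

theorem conjStarAlgAut_permMatrix_diagonal {R : Type*} [CommRing R] [StarRing R]
    (σ : Equiv.Perm m) (d : m → R) :
    conjStarAlgAut R _ ⟨σ.permMatrix R, permMatrix_mem_unitaryGroup σ⟩ (diagonal d) =
      diagonal (d ∘ σ) := by
  rw [conjStarAlgAut_apply, star_eq_conjTranspose, conjTranspose_permMatrix,
    PEquiv.toMatrix_toPEquiv_mul, PEquiv.mul_toMatrix_toPEquiv, submatrix_submatrix]
  exact submatrix_diagonal_equiv d σ

theorem exists_conjStarAlgAut_eq_of_charpoly_eq {A B : Matrix m m ℂ} [IsStarNormal A]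
    [IsStarNormal B] (h : A.charpoly = B.charpoly) :
    ∃ U : unitaryGroup m ℂ, conjStarAlgAut ℂ _ U A = B := by
  obtain ⟨P, d, rfl⟩ := exists_eq_conjStarAlgAut_diagonal A
  obtain ⟨Q, e, rfl⟩ := exists_eq_conjStarAlgAut_diagonal B
  have hroots : Finset.univ.val.map e = Finset.univ.val.map d := by
    simpa only [charpoly_conjStarAlgAut, roots_charpoly_diagonal] using congr(($h).roots).symm
  obtain ⟨σ, rfl⟩ := exists_perm_comp_eq_of_map_univ_eq hroots
  refine ⟨Q * ⟨σ.permMatrix ℂ, permMatrix_mem_unitaryGroup σ⟩ * star P, ?_⟩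
  rw [← conjStarAlgAut_permMatrix_diagonal, ← conjStarAlgAut_mul_apply, ← conjStarAlgAut_mul_apply,
    mul_assoc, Unitary.star_mul_self, mul_one]

theorem exists_forall_eval_eq {ι F : Type*} [Finite ι] [Field F] (d : ι → F) (f : F → F) :
    ∃ p : F[X], ∀ i, p.eval (d i) = f (d i) := by
  classical
  have := Fintype.ofFinite ι
  exact ⟨Lagrange.interpolate (Finset.univ.image d) id f, fun i ↦
    Lagrange.eval_interpolate_at_node f (Set.injOn_id _)
      (Finset.mem_image_of_mem d (Finset.mem_univ i))⟩

theorem diagonal_mem_unitaryGroup_iff {R : Type*} [CommRing R] [StarRing R] {d : m → R} :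
    diagonal d ∈ unitaryGroup m R ↔ ∀ i, d i ∈ unitary R := by
  simp only [mem_unitaryGroup_iff, star_eq_conjTranspose, diagonal_conjTranspose,
    diagonal_mul_diagonal, ← diagonal_one, diagonal_injective.eq_iff, funext_iff, Pi.star_apply,
    Unitary.mem_iff_self_mul_star]

theorem aeval_diagonal {R : Type*} [CommSemiring R] (d : m → R) (p : R[X]) :
    aeval (diagonal d) p = diagonal fun i ↦ p.eval (d i) := by
  simpa only [diagonalAlgHom_apply, aeval_pi_apply, coe_aeval_eq_eval] using!
    aeval_algHom_apply (diagonalAlgHom R) d p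

theorem mem_unitary_iff_norm_eq_one {z : 𝕜} : z ∈ unitary 𝕜 ↔ ‖z‖ = 1 := by
  rw [Unitary.mem_iff_self_mul_star, RCLike.star_def, RCLike.mul_conj]
  norm_cast
  exact pow_eq_one_iff_of_nonneg (norm_nonneg z) two_ne_zero

theorem exists_aeval_mem_unitaryGroup_sq_eq {W : Matrix m m ℂ} (hW : W ∈ unitaryGroup m ℂ) :
    ∃ p : ℂ[X], aeval W p ∈ unitaryGroup m ℂ ∧ aeval W p ^ 2 = W := by
  have : IsStarNormal W := isStarNormal_of_mem_unitary hW
  obtain ⟨Q, d, rfl⟩ := exists_eq_conjStarAlgAut_diagonal W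
  have hd : diagonal d ∈ unitaryGroup m ℂ := by
    simpa only [StarAlgEquiv.symm_apply_apply] using!
      Unitary.map_mem (conjStarAlgAut ℂ _ Q).symm hW
  have hsq (z : ℂ) : (z ^ (2⁻¹ : ℂ)) ^ 2 = z := Complex.cpow_nat_inv_pow z two_ne_zero
  obtain ⟨p, hp⟩ := exists_forall_eval_eq d (· ^ (2⁻¹ : ℂ))
  refine ⟨p, ?_⟩
  rw [aeval_algHom_apply, aeval_diagonal, ← map_pow, diagonal_pow]
  refine ⟨Unitary.map_mem _ (diagonal_mem_unitaryGroup_iff.mpr fun i ↦ ?_), ?_⟩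
  · have hdi := mem_unitary_iff_norm_eq_one.mp (diagonal_mem_unitaryGroup_iff.mp hd i)
    rw [mem_unitary_iff_norm_eq_one, hp, ← pow_eq_one_iff_of_nonneg (norm_nonneg _) two_ne_zero,
      ← norm_pow, hsq, hdi]
  · congr 2
    exact funext fun i ↦ by rw [Pi.pow_apply, hp, hsq]

theorem isAdjointPair_aeval {R : Type*} [CommRing R] {J A A' : Matrix m m R}
    (h : J.IsAdjointPair J A A') (p : R[X]) : J.IsAdjointPair J (aeval A p) (aeval A' p) := by
  have hpow (k : ℕ) : J * A' ^ k = Aᵀ ^ k * J :=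
    SemiconjBy.pow_right (show SemiconjBy J A' Aᵀ from h.symm) k
  change (aeval A p)ᵀ * J = J * aeval A' p
  simp only [aeval_eq_sum_range, transpose_sum, transpose_smul, transpose_pow, Finset.sum_mul,
    Finset.mul_sum, smul_mul_assoc, mul_smul_comm, hpow]

theorem commute_mul_of_transpose_mul_mul_eq {R : Type*} [CommRing R] {J J' K A : Matrix m m R}
    (hJ : J' * J = 1) (hJA : Aᵀ * J * A = J) (hKA : Aᵀ * K * A = K) : Commute A (J' * K) := by
  have hA : A * (J' * (Aᵀ * J)) = 1 := by
    rw [mul_eq_one_comm, mul_assoc, hJA, hJ]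
  have hJ' : A * J' * Aᵀ = J' := by
    calc A * J' * Aᵀ = A * (J' * (Aᵀ * J)) * J' := by
          simp only [mul_assoc, mul_eq_one_comm.mp hJ, mul_one]
      _ = J' := by rw [hA, one_mul]
  calc A * (J' * K) = A * J' * (Aᵀ * K * A) := by rw [hKA, mul_assoc]
    _ = A * J' * Aᵀ * K * A := by simp only [mul_assoc]
    _ = J' * K * A := by rw [hJ']

theorem exists_unitary_transpose_mul_mul_eq {ε : ℂ} {J K : Matrix m m ℂ}
    (hJ : J ∈ unitaryGroup m ℂ) (hK : K ∈ unitaryGroup m ℂ) (hJε : Jᵀ = ε • J)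
    (hKε : Kᵀ = ε • K) :
    ∃ C : unitaryGroup m ℂ, (C : Matrix m m ℂ)ᵀ * J * C = K ∧
      ∀ A : Matrix m m ℂ, Aᵀ * J * A = J → Aᵀ * K * A = K → Commute A C := by
  let W := star J * K
  have hJW : J * W = K := by rw [← mul_assoc, mem_unitaryGroup_iff.mp hJ, one_mul]
  have hJ' : J = ε • Jᵀ := by rw [← transpose_smul, ← hJε, transpose_transpose]
  have hK' : K = ε • Kᵀ := by rw [← transpose_smul, ← hKε, transpose_transpose]
  have hW : J.IsSelfAdjoint W := by
    calc Wᵀ * J = Wᵀ * (ε • Jᵀ) := congrArg (Wᵀ * ·) hJ'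
      _ = ε • (J * W)ᵀ := by rw [mul_smul_comm, ← transpose_mul]
      _ = J * W := by rw [hJW, ← hK']
  obtain ⟨p, hC, hsq⟩ :=
    exists_aeval_mem_unitaryGroup_sq_eq (mul_mem (Unitary.star_mem hJ) hK : W ∈ unitaryGroup m ℂ)
  refine ⟨⟨aeval W p, hC⟩, ?_, fun A hJA hKA ↦ ?_⟩
  · have hCJ : (aeval W p)ᵀ * J = J * aeval W p := isAdjointPair_aeval hW p
    calc (aeval W p)ᵀ * J * aeval W p = J * aeval W p * aeval W p := by rw [hCJ]
      _ = K := by rw [mul_assoc, ← sq, hsq, hJW]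
  · exact Algebra.commute_of_mem_adjoin_singleton_of_commute (aeval_mem_adjoin_singleton ℂ W)
      (commute_mul_of_transpose_mul_mul_eq (mem_unitaryGroup_iff'.mp hJ) hJA hKA)

theorem sp_conj_of_charpoly_eq_general {ε : ℂ} {J A B : Matrix m m ℂ} (hJ : J ∈ unitaryGroup m ℂ)
    (hJε : Jᵀ = ε • J) [IsStarNormal A] [IsStarNormal B] (hA : Aᵀ * J * A = J)
    (hB : Bᵀ * J * B = J) (h : A.charpoly = B.charpoly) :
    ∃ U : unitaryGroup m ℂ, (U : Matrix m m ℂ)ᵀ * J * U = J ∧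
      U * A * star (U : Matrix m m ℂ) = B := by
  obtain ⟨V, hVA⟩ := exists_conjStarAlgAut_eq_of_charpoly_eq h
  let K : Matrix m m ℂ := (V : Matrix m m ℂ)ᵀ * J * V
  have hK : K ∈ unitaryGroup m ℂ :=
    mul_mem (mul_mem (transpose_mem_unitaryGroup_iff.mpr V.2) hJ) V.2
  have hKε : Kᵀ = ε • K := by
    simp only [K, transpose_mul, transpose_transpose, hJε, smul_mul_assoc, mul_smul_comm, mul_assoc]
  have hKA : Aᵀ * K * A = K := by
    have hVA' : (V * A : Matrix m m ℂ) = B * V := conjStarAlgAut_apply_eq_iff.mp hVA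
    calc Aᵀ * K * A = (V * A : Matrix m m ℂ)ᵀ * J * (V * A : Matrix m m ℂ) := by
          simp only [K, transpose_mul, mul_assoc]
      _ = (V : Matrix m m ℂ)ᵀ * (Bᵀ * J * B) * V := by simp only [hVA', transpose_mul, mul_assoc]
      _ = K := by rw [hB]
  obtain ⟨C, hC, hCcomm⟩ := exists_unitary_transpose_mul_mul_eq hK hJ hKε hJε
  have hCA : conjStarAlgAut ℂ _ C A = A :=
    conjStarAlgAut_apply_eq_iff.mpr (hCcomm A hKA hA).eq.symm
  refine ⟨V * C, ?_, ?_⟩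
  · simpa only [K, UnitaryGroup.mul_val, transpose_mul, mul_assoc] using hC
  · rw [← conjStarAlgAut_apply (S := ℂ), conjStarAlgAut_mul_apply, hCA, hVA]

end

theorem transpose_sympJ (n : ℕ) : (sympJ n)ᵀ = (-1 : ℂ) • sympJ n := by
  simp [sympJ, Matrix.fromBlocks_transpose, Matrix.fromBlocks_neg]

theorem sympJ_mem_unitaryGroup (n : ℕ) : sympJ n ∈ Matrix.unitaryGroup (Fin n ⊕ Fin n) ℂ := by
  simp [Matrix.mem_unitaryGroup_iff, Matrix.star_eq_conjTranspose, sympJ,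
    Matrix.fromBlocks_conjTranspose, Matrix.fromBlocks_multiply]

/-- In `Sp(n)`, the characteristic polynomial determines the conjugacy class:
if `A, B ∈ Sp(n)` have the same characteristic polynomial, they are conjugate in `Sp(n)`. -/
theorem sp_conj_of_charpoly_eq {n : ℕ} (A B : Matrix.unitaryGroup (Fin n ⊕ Fin n) ℂ)
    (hA : A ∈ CompactSp n) (hB : B ∈ CompactSp n)
    (h : (A : Matrix (Fin n ⊕ Fin n) (Fin n ⊕ Fin n) ℂ).charpoly =
         (B : Matrix (Fin n ⊕ Fin n) (Fin n ⊕ Fin n) ℂ).charpoly) :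
    ∃ U ∈ CompactSp n, U * A * U⁻¹ = B := by
  obtain ⟨U, hU, hUA⟩ := sp_conj_of_charpoly_eq_general (sympJ_mem_unitaryGroup n)
    (transpose_sympJ n) hA hB h
  exact ⟨U, hU, Subtype.ext hUA⟩
end
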